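/- arXiv:0710.2898 — 2 statements merged into one kernel-verified Lean document; each statement's English description precedes it below -/
import Mathlib

section
/- Let ℋ be a complex Hilbert space, let A ∈ B(ℋ) be normal, let k be a positive integer with k ≤ dim ℋ, and let λ ∈ ℂ. Then λ ∉ Λ_k(A) if and only if A admits an orthogonal decomposition A = Ã₁ ⊕ Ã₂ such that dim Ã₁ ≤ k−1, W(Ã₁) ⊆ λ + S, and W(Ã₂) ⊆ ℂ \ (λ + S), where S = e^{it}(𝒫 ∪ L̃) for some t ∈ ℝ, with 𝒫 = {z ∈ ℂ : Im(z) > 0} and L̃ = (−∞,0] or [0,∞). -/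
noncomputable section

open scoped InnerProductSpace
open Complex

variable {H : Type*} [NormedAddCommGroup H] [InnerProductSpace ℂ H] [CompleteSpace H]

/-- `P` is an orthogonal projection: self-adjoint and idempotent. -/
def IsOrthProj (P : H →L[ℂ] H) : Prop :=
  IsSelfAdjoint P ∧ P ∘L P = P

/-- The rank of a bounded operator, as a cardinal. -/
def opRank (F : H →L[ℂ] H) : Cardinal :=
  Module.rank ℂ (LinearMap.range (F : H →ₗ[ℂ] H))

/-- The rank-`k` numerical range `Λ_k(A)`. -/
def rankKRange (k : ℕ) (A : H →L[ℂ] H) : Set ℂ :=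
  { lam | ∃ P : H →L[ℂ] H, IsOrthProj P ∧ opRank P = k ∧ P ∘L A ∘L P = lam • P }

/-- The classical numerical range `W(A)`. -/
def numRange (A : H →L[ℂ] H) : Set ℂ :=
  { z | ∃ x : H, ‖x‖ = 1 ∧ ⟪x, A x⟫_ℂ = z }

/-- `λ_k(T)`: the supremum over `k`-dimensional compressions of the `k`-th largest
eigenvalue of the compression (Courant–Fischer form: sup over `k`-dimensional
subspaces of the infimum of the Rayleigh quotient). -/
def lambdaSA (k : ℕ) (T : H →L[ℂ] H) : ℝ :=
  sSup { t : ℝ | ∃ V : Submodule ℂ H, Module.finrank ℂ V = k ∧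
    ∀ x ∈ V, ‖x‖ = 1 → t ≤ (⟪x, T x⟫_ℂ).re }

/-- The real part `(T + T*)/2` of an operator. -/
def reOp (T : H →L[ℂ] H) : H →L[ℂ] H :=
  (2 : ℂ)⁻¹ • (T + ContinuousLinearMap.adjoint T)

/-- The set `Ω_k(A)`. -/
def omegaK (k : ℕ) (A : H →L[ℂ] H) : Set ℂ :=
  { μ | ∀ ξ ∈ Set.Ico (0 : ℝ) (2 * Real.pi),
      (Complex.exp (ξ * Complex.I) * μ).re ≤ lambdaSA k (reOp (Complex.exp (ξ * Complex.I) • A)) }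


set_option linter.unusedSectionVars false

/-! ### Part 1: spectral splitting -/

lemma posneg (B : H →L[ℂ] H) (hB : IsSelfAdjoint B) :
    ∃ Bp Bm : H →L[ℂ] H, Bp.IsPositive ∧ Bm.IsPositive ∧ B = Bp - Bm ∧
      (∀ x, Bp (Bm x) = 0) ∧ (∀ x, Bm (Bp x) = 0) ∧
      (∀ X : H →L[ℂ] H, Commute B X → Commute Bp X ∧ Commute Bm X) := by
  refine ⟨B⁺, B⁻, ?_, ?_, ?_, ?_, ?_, ?_⟩
  · exact (ContinuousLinearMap.nonneg_iff_isPositive _).1 (CFC.posPart_nonneg B)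
  · exact (ContinuousLinearMap.nonneg_iff_isPositive _).1 (CFC.negPart_nonneg B)
  · exact (CFC.posPart_sub_negPart B hB).symm
  · intro x
    have := congrArg (fun f : H →L[ℂ] H => f x) (CFC.posPart_mul_negPart B)
    exact this
  · intro x
    have := congrArg (fun f : H →L[ℂ] H => f x) (CFC.negPart_mul_posPart B)
    exact this
  · intro X hX
    exact ⟨by rw [CFC.posPart_def]; exact hX.cfcₙ_real _, by rw [CFC.negPart_def]; exact hX.cfcₙ_real _⟩

lemma pos_zero (T : H →L[ℂ] H) (hT : T.IsPositive) (x : H) (h : (⟪x, T x⟫_ℂ).re = 0) : T x = 0 := by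
  obtain ⟨S, hS⟩ := (CStarAlgebra.nonneg_iff_eq_star_mul_self (a := T)).1
    ((ContinuousLinearMap.nonneg_iff_isPositive _).2 hT)
  have h1 : ⟪x, T x⟫_ℂ = ⟪S x, S x⟫_ℂ := by
    rw [hS, mul_apply_eq_comp, ContinuousLinearMap.star_eq_adjoint,
      ContinuousLinearMap.adjoint_inner_right]
  rw [h1] at h
  have h2 : S x = 0 := by
    have := inner_self_eq_norm_sq (𝕜 := ℂ) (S x)
    have h3 : ‖S x‖ ^ 2 = 0 := this.symm.trans h
    simpa using h3
  rw [hS, mul_apply_eq_comp, h2, map_zero]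

lemma pos_re (T : H →L[ℂ] H) (hT : T.IsPositive) (x : H) : 0 ≤ (⟪x, T x⟫_ℂ).re := 
  hT.re_inner_nonneg_right x

lemma pos_symm (T : H →L[ℂ] H) (hT : T.IsPositive) (x y : H) : ⟪T x, y⟫_ℂ = ⟪x, T y⟫_ℂ := 
  hT.1 x y

lemma sa_symm (T : H →L[ℂ] H) (hT : IsSelfAdjoint T) (x y : H) : ⟪T x, y⟫_ℂ = ⟪x, T y⟫_ℂ := 
  hT.isSymmetric x y

lemma comm_app {S X : H →L[ℂ] H} (h : Commute S X) (x : H) : S (X x) = X (S x) := 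
  congrArg (fun f : H →L[ℂ] H => f x) h

lemma re_sub_app (P M : H →L[ℂ] H) (x : H) :
    (⟪x, (P - M) x⟫_ℂ).re = (⟪x, P x⟫_ℂ).re - (⟪x, M x⟫_ℂ).re := by
  simp [inner_sub_right]

/-- lexicographic splitting for commuting self-adjoint operators -/
lemma lex_split (u v : H →L[ℂ] H) (hu : IsSelfAdjoint u) (hv : IsSelfAdjoint v)
    (huv : Commute u v) :
    ∃ V : Submodule ℂ H, IsClosed (V : Set H) ∧
      (∀ X : H →L[ℂ] H, Commute u X → Commute v X → Commute u (star X) → ∀ x ∈ V, X x ∈ V) ∧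
      (∀ x ∈ V, x ≠ 0 → 0 < (⟪x, u x⟫_ℂ).re ∨ ((⟪x, u x⟫_ℂ).re = 0 ∧ 0 ≤ (⟪x, v x⟫_ℂ).re)) ∧
      (∀ x ∈ Vᗮ, x ≠ 0 →
        (⟪x, u x⟫_ℂ).re < 0 ∨ ((⟪x, u x⟫_ℂ).re = 0 ∧ (⟪x, v x⟫_ℂ).re < 0)) := by
  obtain ⟨up, um, hup, hum, hu', hupm, hump, huc⟩ := posneg u hu
  obtain ⟨vp, vm, hvp, hvm, hv', hvpm, hvmp, hvc⟩ := posneg v hv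
  have hcu := huc v huv
  have hcvp : Commute vm u := (hvc u huv.symm).2
  have hcvm : Commute vp u := (hvc u huv.symm).1
  have h_ker : ∀ y, u y = 0 → up y = 0 ∧ um y = 0 := by
    intro y hy
    have e : up y = um y := by
      have : u y = up y - um y := by rw [hu']; rfl
      rw [hy] at this
      exact (sub_eq_zero.1 this.symm)
    constructor
    · apply pos_zero up hup
      rw [← pos_symm up hup, e, pos_symm um hum]
      have h1 : ⟪y, um y⟫_ℂ = ⟪y, up y⟫_ℂ := by rw [e]
      have : up (up y) = 0 := by rw [e, hupm]
      have h2 : ‖up y‖ ^ 2 = (⟪y, up (up y)⟫_ℂ).re := by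
        rw [← pos_symm up hup]; exact (inner_self_eq_norm_sq (𝕜 := ℂ) (up y)).symm
      rw [this] at h2
      have h3 : up y = 0 := by simpa using h2
      rw [h1, h3]; simp
    · have : um (um y) = 0 := by rw [← e, hump]
      have h2 : ‖um y‖ ^ 2 = (⟪y, um (um y)⟫_ℂ).re := by
        rw [← pos_symm um hum]; exact (inner_self_eq_norm_sq (𝕜 := ℂ) (um y)).symm
      rw [this] at h2
      simpa using h2
  let V : Submodule ℂ H := LinearMap.ker um.toLinearMap ⊓
    (Submodule.map vm.toLinearMap (LinearMap.ker u.toLinearMap))ᗮ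
  have hV : ∀ x, x ∈ V ↔ um x = 0 ∧ ∀ y, u y = 0 → ⟪vm y, x⟫_ℂ = 0 := by
    intro x
    simp only [V, Submodule.mem_inf, LinearMap.mem_ker, Submodule.mem_orthogonal, Submodule.mem_map]
    constructor
    · rintro ⟨h1, h2⟩
      exact ⟨h1, fun y hy => h2 _ ⟨y, hy, rfl⟩⟩
    · rintro ⟨h1, h2⟩
      refine ⟨h1, ?_⟩
      rintro _ ⟨y, hy, rfl⟩
      exact h2 y hy
  refine ⟨V, ?_, ?_, ?_, ?_⟩
  · exact (um.isClosed_ker).inter (Submodule.isClosed_orthogonal _)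
  · intro X hX1 hX2 hX3 x hx
    rw [hV] at hx ⊢
    refine ⟨by rw [comm_app (huc X hX1).2, hx.1, map_zero], fun y hy => ?_⟩
    have h4 : Commute v (star X) := by
      have := hX2.star_star
      rw [hv.star_eq] at this
      exact this
    rw [← ContinuousLinearMap.adjoint_inner_left, ← ContinuousLinearMap.star_eq_adjoint,
      ← comm_app (hvc _ h4).2]
    apply hx.2
    rw [comm_app hX3, hy, map_zero]
  · intro x hx hx0
    rw [hV] at hx
    have e : (⟪x, u x⟫_ℂ).re = (⟪x, up x⟫_ℂ).re := by
      rw [hu', re_sub_app, hx.1]; simp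
    rcases (pos_re up hup x).lt_or_eq with h | h
    · left; rwa [e]
    · right
      refine ⟨by rw [e, h], ?_⟩
      have h1 := pos_zero up hup x h.symm
      have h2 : u x = 0 := by rw [hu']; simp [h1, hx.1]
      have h3 := hx.2 x h2
      rw [pos_symm vm hvm] at h3
      rw [hv', re_sub_app, h3]
      simpa using pos_re vp hvp x
  · intro x hx hx0
    have hxo : ∀ y ∈ V, ⟪y, x⟫_ℂ = 0 := fun y hy => (Submodule.mem_orthogonal _ _).1 hx y hy
    have h1 : up x = 0 := by
      have h2 : up (up x) ∈ V := by
        rw [hV]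
        refine ⟨hump _, fun y hy => ?_⟩
        rw [← pos_symm up hup, comm_app (huc vm hcvp.symm).1, (h_ker y hy).1]
        simp
      have h3 := hxo _ h2
      rw [pos_symm up hup] at h3
      exact inner_self_eq_zero.1 h3
    have e : (⟪x, u x⟫_ℂ).re = -(⟪x, um x⟫_ℂ).re := by
      rw [hu', re_sub_app, h1]; simp
    rcases (pos_re um hum x).lt_or_eq with h | h
    · left; rw [e]; linarith
    · right
      refine ⟨by rw [e, ← h]; simp, ?_⟩
      have h2 := pos_zero um hum x h.symm
      have h3 : u x = 0 := by rw [hu']; simp [h1, h2]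
      have h4 : vp x ∈ V := by
        rw [hV]
        refine ⟨?_, fun y hy => ?_⟩
        · rw [comm_app (huc vp hcvm.symm).2, h2, map_zero]
        · rw [← pos_symm vp hvp, hvpm, inner_zero_left]
      have h5 := hxo _ h4
      rw [pos_symm vp hvp] at h5
      have e2 : (⟪x, v x⟫_ℂ).re = -(⟪x, vm x⟫_ℂ).re := by
        rw [hv', re_sub_app, h5]; simp
      rw [e2]
      rcases (pos_re vm hvm x).lt_or_eq with h6 | h6
      · linarith
      · exfalso
        have h7 := pos_zero vm hvm x h6.symm
        apply hx0
        have h8 : x ∈ V := by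
          rw [hV]
          refine ⟨h2, fun y hy => ?_⟩
          rw [pos_symm vm hvm, h7, inner_zero_right]
        exact inner_self_eq_zero.1 (hxo x h8)


lemma proj_comm (U : Submodule ℂ H) [U.HasOrthogonalProjection] (X : H →L[ℂ] H)
    (h1 : ∀ x ∈ U, X x ∈ U) (h2 : ∀ x ∈ U, star X x ∈ U) : Commute U.starProjection X := by
  ext x
  change U.starProjection (X x) = X (U.starProjection x)
  apply Submodule.eq_starProjection_of_mem_of_inner_eq_zero
  · exact h1 _ (Submodule.starProjection_apply_mem U x)
  · intro w hw
    rw [← map_sub, ← ContinuousLinearMap.adjoint_inner_right]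
    apply Submodule.starProjection_inner_eq_zero x _ (h2 w hw)

lemma sign_split (B : H →L[ℂ] H) (hB : IsSelfAdjoint B) :
    ∃ (L R K : Submodule ℂ H) (PL PR PK : H →L[ℂ] H),
      (∀ x, PL x ∈ L) ∧ (∀ x, PR x ∈ R) ∧ (∀ x, PK x ∈ K) ∧ (∀ x, x = PL x + PR x + PK x) ∧
      (∀ X : H →L[ℂ] H, Commute B X → Commute B (star X) →
        Commute PL X ∧ Commute PR X ∧ Commute PK X ∧ (∀ x ∈ L, X x ∈ L) ∧ (∀ x ∈ R, X x ∈ R) ∧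
        (∀ x ∈ K, X x ∈ K)) ∧
      (∀ x ∈ L, ∀ y ∈ R, ⟪x, y⟫_ℂ = 0) ∧ (∀ x ∈ L, ∀ y ∈ K, ⟪x, y⟫_ℂ = 0) ∧
      (∀ x ∈ R, ∀ y ∈ K, ⟪x, y⟫_ℂ = 0) ∧
      (∀ x ∈ L, x ≠ 0 → 0 < (⟪x, B x⟫_ℂ).re) ∧ (∀ x ∈ R, x ≠ 0 → (⟪x, B x⟫_ℂ).re < 0) ∧
      (∀ x ∈ K, B x = 0) := by
  obtain ⟨p, m, hp, hm, hB', hpm, hmp, hc⟩ := posneg B hB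
  have hcp : CompleteSpace (LinearMap.ker p.toLinearMap) := (p.isClosed_ker).completeSpace_coe
  have hcm : CompleteSpace (LinearMap.ker m.toLinearMap) := (m.isClosed_ker).completeSpace_coe
  set U := LinearMap.ker p.toLinearMap with hU
  set W := LinearMap.ker m.toLinearMap with hW
  have mU : ∀ x, x ∈ U ↔ p x = 0 := fun x => by simp [hU]
  have mW : ∀ x, x ∈ W ↔ m x = 0 := fun x => by simp [hW]
  have hLW : ∀ x ∈ Uᗮ, m x = 0 := by
    intro x hx
    have : m (m x) ∈ U := by rw [mU]; exact hpm _
    have h := (Submodule.mem_orthogonal _ _).1 hx _ this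
    rw [pos_symm m hm] at h
    exact inner_self_eq_zero.1 h
  have hRU : ∀ x ∈ Wᗮ, p x = 0 := by
    intro x hx
    have : p (p x) ∈ W := by rw [mW]; exact hmp _
    have h := (Submodule.mem_orthogonal _ _).1 hx _ this
    rw [pos_symm p hp] at h
    exact inner_self_eq_zero.1 h
  have invU : ∀ X : H →L[ℂ] H, Commute B X → ∀ x ∈ U, X x ∈ U := by
    intro X hX x hx
    rw [mU] at hx ⊢
    rw [comm_app (hc X hX).1, hx, map_zero]
  have invW : ∀ X : H →L[ℂ] H, Commute B X → ∀ x ∈ W, X x ∈ W := by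
    intro X hX x hx
    rw [mW] at hx ⊢
    rw [comm_app (hc X hX).2, hx, map_zero]
  have invO : ∀ (S : Submodule ℂ H) (X : H →L[ℂ] H), (∀ x ∈ S, star X x ∈ S) → ∀ x ∈ Sᗮ, X x ∈ Sᗮ := by
    intro S X hS x hx
    rw [Submodule.mem_orthogonal] at hx ⊢
    intro y hy
    rw [← ContinuousLinearMap.adjoint_inner_left]
    exact hx _ (hS y hy)
  have cU : ∀ X : H →L[ℂ] H, Commute B X → Commute B (star X) →
      Commute Uᗮ.starProjection X ∧ ∀ x ∈ Uᗮ, X x ∈ Uᗮ := by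
    intro X h1 h2
    have a := invO U X (invU _ h2)
    have b := invO U (star X) (by rw [star_star]; exact invU _ h1)
    exact ⟨proj_comm _ X a b, a⟩
  have cW : ∀ X : H →L[ℂ] H, Commute B X → Commute B (star X) →
      Commute Wᗮ.starProjection X ∧ ∀ x ∈ Wᗮ, X x ∈ Wᗮ := by
    intro X h1 h2
    have a := invO W X (invW _ h2)
    have b := invO W (star X) (by rw [star_star]; exact invW _ h1)
    exact ⟨proj_comm _ X a b, a⟩
  have pB : Commute B p := ((hc B (Commute.refl B)).1).symm
  have mB : Commute B m := ((hc B (Commute.refl B)).2).symm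
  have sp : star p = p := hp.isSelfAdjoint
  have sm : star m = m := hm.isSelfAdjoint
  refine ⟨Uᗮ, Wᗮ, LinearMap.ker B.toLinearMap, Uᗮ.starProjection, Wᗮ.starProjection,
    1 - Uᗮ.starProjection - Wᗮ.starProjection, ?_, ?_, ?_, ?_, ?_, ?_, ?_, ?_, ?_, ?_, ?_⟩
  · exact fun x => Submodule.starProjection_apply_mem _ x
  · exact fun x => Submodule.starProjection_apply_mem _ x
  · intro x
    rw [LinearMap.mem_ker]
    have e1 : p (x - Uᗮ.starProjection x) = 0 := by
      rw [← mU]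
      have := Submodule.sub_starProjection_mem_orthogonal (K := Uᗮ) x
      rwa [Submodule.orthogonal_orthogonal] at this
    have e2 : m (x - Wᗮ.starProjection x) = 0 := by
      rw [← mW]
      have := Submodule.sub_starProjection_mem_orthogonal (K := Wᗮ) x
      rwa [Submodule.orthogonal_orthogonal] at this
    have e3 := hLW _ (Submodule.starProjection_apply_mem Uᗮ x)
    have e4 := hRU _ (Submodule.starProjection_apply_mem Wᗮ x)
    have e5 : (B.toLinearMap) ((1 - Uᗮ.starProjection - Wᗮ.starProjection) x) =
      (p (x - Uᗮ.starProjection x) - p (Wᗮ.starProjection x)) - (m (x - Wᗮ.starProjection x) 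
        - m (Uᗮ.starProjection x)) := by
      rw [hB']
      simp only [ContinuousLinearMap.coe_coe, sub_apply, map_sub, one_apply_eq_self]
      abel
    rw [e5, e1, e2, e3, e4]; simp
  · intro x
    simp
  · intro X h1 h2
    refine ⟨(cU X h1 h2).1, (cW X h1 h2).1, ?_, (cU X h1 h2).2, (cW X h1 h2).2, ?_⟩
    · exact ((Commute.one_left X).sub_left (cU X h1 h2).1).sub_left (cW X h1 h2).1
    · intro x hx
      rw [LinearMap.mem_ker] at hx ⊢
      change B x = 0 at hx
      change B (X x) = 0
      rw [comm_app h1, hx, map_zero]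
  · intro x hx y hy
    exact (Submodule.mem_orthogonal _ _).1 hy x ((mW x).2 (hLW x hx))
  · intro x hx y hy
    rw [LinearMap.mem_ker] at hy
    change B y = 0 at hy
    have h1 : p y = m y := by
      rw [hB'] at hy; exact sub_eq_zero.1 hy
    have h2 : p y = 0 := by
      have : p (p y) = 0 := by rw [h1, hpm]
      have h3 : ⟪p y, p y⟫_ℂ = 0 := by rw [pos_symm p hp, this, inner_zero_right]
      exact inner_self_eq_zero.1 h3
    exact inner_eq_zero_symm.1 ((Submodule.mem_orthogonal _ _).1 hx y ((mU y).2 h2))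
  · intro x hx y hy
    rw [LinearMap.mem_ker] at hy
    change B y = 0 at hy
    have h1 : p y = m y := by
      rw [hB'] at hy; exact sub_eq_zero.1 hy
    have h2 : m y = 0 := by
      have : m (m y) = 0 := by rw [← h1, hmp]
      have h3 : ⟪m y, m y⟫_ℂ = 0 := by rw [pos_symm m hm, this, inner_zero_right]
      exact inner_self_eq_zero.1 h3
    exact inner_eq_zero_symm.1 ((Submodule.mem_orthogonal _ _).1 hx y ((mW y).2 h2))
  · intro x hx h0
    rw [hB', re_sub_app, hLW x hx]
    rcases (pos_re p hp x).lt_or_eq with h | h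
    · simpa using h
    · exact absurd (inner_self_eq_zero.1 ((Submodule.mem_orthogonal _ _).1 hx x
        ((mU x).2 (pos_zero p hp x h.symm)))) h0
  · intro x hx h0
    rw [hB', re_sub_app, hRU x hx]
    rcases (pos_re m hm x).lt_or_eq with h | h
    · simpa using h
    · exact absurd (inner_self_eq_zero.1 ((Submodule.mem_orthogonal _ _).1 hx x
        ((mW x).2 (pos_zero m hm x h.symm)))) h0
  · intro x hx
    exact hx


/-- lexicographic half-plane condition -/
def SS (p q ε c b : ℝ) : Prop := 0 < p * c + q * b ∨ (p * c + q * b = 0 ∧ 0 ≤ ε * (q * c - p * b))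

def Dec (N : H →L[ℂ] H) (k : ℕ) : Prop :=
  ∃ p q ε : ℝ, (p ≠ 0 ∨ q ≠ 0) ∧ (ε = 1 ∨ ε = -1) ∧ ∃ V : Submodule ℂ H, IsClosed (V : Set H) ∧
    (∀ x ∈ V, N x ∈ V ∧ star N x ∈ V) ∧ Module.rank ℂ V ≤ ((k - 1 : ℕ) : Cardinal) ∧
    (∀ x ∈ V, x ≠ 0 → SS p q ε (⟪x, N x⟫_ℂ).re (⟪x, N x⟫_ℂ).im) ∧
    (∀ x ∈ Vᗮ, x ≠ 0 → ¬ SS p q ε (⟪x, N x⟫_ℂ).re (⟪x, N x⟫_ℂ).im)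

structure Split (N : H →L[ℂ] H) where
  L : Submodule ℂ H
  R : Submodule ℂ H
  K : Submodule ℂ H
  PL : H →L[ℂ] H
  PR : H →L[ℂ] H
  PK : H →L[ℂ] H
  memL : ∀ x, PL x ∈ L
  memR : ∀ x, PR x ∈ R
  memK : ∀ x, PK x ∈ K
  sum : ∀ x, x = PL x + PR x + PK x
  cL : Commute PL N ∧ Commute PL (star N)
  cR : Commute PR N ∧ Commute PR (star N)
  cK : Commute PK N ∧ Commute PK (star N)
  invL : ∀ x ∈ L, N x ∈ L
  invR : ∀ x ∈ R, N x ∈ R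
  invK : ∀ x ∈ K, N x ∈ K
  oLR : ∀ x ∈ L, ∀ y ∈ R, ⟪x, y⟫_ℂ = 0
  oLK : ∀ x ∈ L, ∀ y ∈ K, ⟪x, y⟫_ℂ = 0
  oRK : ∀ x ∈ R, ∀ y ∈ K, ⟪x, y⟫_ℂ = 0
  posL : ∀ x ∈ L, x ≠ 0 → 0 < (⟪x, N x⟫_ℂ).im
  negR : ∀ x ∈ R, x ≠ 0 → (⟪x, N x⟫_ℂ).im < 0
  zeroK : ∀ x ∈ K, (⟪x, N x⟫_ℂ).im = 0

def rP (N : H →L[ℂ] H) : H →L[ℂ] H := (2 : ℂ)⁻¹ • (N + star N)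
def iP (N : H →L[ℂ] H) : H →L[ℂ] H := (-(I / 2)) • (N - star N)

lemma rP_sa (N : H →L[ℂ] H) : IsSelfAdjoint (rP N) := by
  rw [isSelfAdjoint_iff, rP, star_smul, star_add, star_star, add_comm]
  congr 1
  simp

lemma iP_sa (N : H →L[ℂ] H) : IsSelfAdjoint (iP N) := by
  rw [isSelfAdjoint_iff, iP, star_smul, star_sub, star_star, ← neg_sub, smul_neg, ← neg_smul]
  congr 1
  simp only [star_neg, RCLike.star_def, map_div₀, conj_I, map_ofNat]
  ring

lemma inner_star (N : H →L[ℂ] H) (x : H) : ⟪x, star N x⟫_ℂ = (starRingEnd ℂ) ⟪x, N x⟫_ℂ := by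
  rw [ContinuousLinearMap.star_eq_adjoint, ContinuousLinearMap.adjoint_inner_right, inner_conj_symm]

lemma rP_re (N : H →L[ℂ] H) (x : H) : (⟪x, rP N x⟫_ℂ).re = (⟪x, N x⟫_ℂ).re := by
  have : ⟪x, rP N x⟫_ℂ = (2 : ℂ)⁻¹ * (⟪x, N x⟫_ℂ + (starRingEnd ℂ) ⟪x, N x⟫_ℂ) := by
    rw [← inner_star, ← inner_add_right, ← inner_smul_right]; rfl
  rw [this, Complex.add_conj]
  simp

lemma iP_re (N : H →L[ℂ] H) (x : H) : (⟪x, iP N x⟫_ℂ).re = (⟪x, N x⟫_ℂ).im := by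
  have : ⟪x, iP N x⟫_ℂ = (-(I / 2)) * (⟪x, N x⟫_ℂ - (starRingEnd ℂ) ⟪x, N x⟫_ℂ) := by
    rw [← inner_star, ← inner_sub_right, ← inner_smul_right]; rfl
  rw [this, Complex.sub_conj]
  simp

lemma rP_comm {N X : H →L[ℂ] H} (h1 : Commute N X) (h2 : Commute (star N) X) : Commute (rP N) X :=
  (h1.add_left h2).smul_left _

lemma iP_comm {N X : H →L[ℂ] H} (h1 : Commute N X) (h2 : Commute (star N) X) : Commute (iP N) X :=
  (h1.sub_left h2).smul_left _

lemma exists_split (N : H →L[ℂ] H) (hN : Commute (star N) N) : Nonempty (Split N) := by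
  obtain ⟨L, R, K, PL, PR, PK, h1, h2, h3, h4, h5, h6, h7, h8, h9, h10, h11⟩ := 
    sign_split (iP N) (iP_sa N)
  have a := iP_comm (Commute.refl N) hN
  have b := iP_comm hN.symm (Commute.refl (star N))
  obtain ⟨c1, c2, c3, c4, c5, c6⟩ := h5 N a b
  obtain ⟨d1, d2, d3, -⟩ := h5 (star N) b (by rwa [star_star])
  exact ⟨⟨L, R, K, PL, PR, PK, h1, h2, h3, h4, ⟨c1, d1⟩, ⟨c2, d2⟩, ⟨c3, d3⟩, c4, c5, c6, h6, h7, h8,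
    fun x hx h0 => by rw [← iP_re]; exact h9 x hx h0,
    fun x hx h0 => by rw [← iP_re]; exact h10 x hx h0,
    fun x hx => by rw [← iP_re, h11 x hx]; simp⟩⟩

lemma exists_sub_of_rank (V : Submodule ℂ H) (k : ℕ) (h : (k : Cardinal) ≤ Module.rank ℂ V) :
    ∃ Z ≤ V, FiniteDimensional ℂ Z ∧ Module.finrank ℂ Z = k := by
  obtain ⟨s, hs, hli⟩ := le_rank_iff_exists_linearIndependent_finset.1 h
  have hli' : LinearIndependent ℂ (fun i : s => ((i : V) : H)) :=
    hli.map' V.subtype (Submodule.ker_subtype V)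
  refine ⟨Submodule.span ℂ (Set.range (fun i : s => ((i : V) : H))), ?_, ?_, ?_⟩
  · rw [Submodule.span_le]; rintro _ ⟨i, rfl⟩; exact (i : V).2
  · exact FiniteDimensional.span_of_finite ℂ (Set.finite_range _)
  · rw [finrank_span_eq_card hli']; simpa using hs

lemma exists_sub_of_finrank (V : Submodule ℂ H) [FiniteDimensional ℂ V] (k : ℕ)
    (h : k ≤ Module.finrank ℂ V) :
    ∃ Z ≤ V, FiniteDimensional ℂ Z ∧ Module.finrank ℂ Z = k := by
  apply exists_sub_of_rank
  rw [← Module.finrank_eq_rank]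
  exact_mod_cast h

lemma dec_of_bounds (N : H →L[ℂ] H) (hN : Commute (star N) N) (S : Split N) (k : ℕ)
    (p q ε : ℝ) (hpq : p ≠ 0 ∨ q ≠ 0) (hε : ε = 1 ∨ ε = -1) (nL nR nK : ℕ) (hk : nL + nR + nK < k)
    (hL : ∀ X ≤ S.L, FiniteDimensional ℂ X →
      (∀ x ∈ X, x ≠ 0 → SS p q ε (⟪x, N x⟫_ℂ).re (⟪x, N x⟫_ℂ).im) → Module.finrank ℂ X ≤ nL)
    (hR : ∀ X ≤ S.R, FiniteDimensional ℂ X →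
      (∀ x ∈ X, x ≠ 0 → SS p q ε (⟪x, N x⟫_ℂ).re (⟪x, N x⟫_ℂ).im) → Module.finrank ℂ X ≤ nR)
    (hK : ∀ X ≤ S.K, FiniteDimensional ℂ X →
      (∀ x ∈ X, x ≠ 0 → SS p q ε (⟪x, N x⟫_ℂ).re (⟪x, N x⟫_ℂ).im) → Module.finrank ℂ X ≤ nK) :
    Dec N k := by
  set u : H →L[ℂ] H := (p : ℝ) • rP N + q • iP N with hu
  set v : H →L[ℂ] H := ε • (q • rP N - p • iP N) with hv
  have comm_u : ∀ X : H →L[ℂ] H, Commute N X → Commute (star N) X → Commute u X := by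
    intro X h1 h2
    exact ((rP_comm h1 h2).smul_left _).add_left ((iP_comm h1 h2).smul_left _)
  have comm_v : ∀ X : H →L[ℂ] H, Commute N X → Commute (star N) X → Commute v X := by
    intro X h1 h2
    exact (((rP_comm h1 h2).smul_left _).sub_left ((iP_comm h1 h2).smul_left _)).smul_left _
  have hsu : IsSelfAdjoint u := by
    exact ((IsSelfAdjoint.all p).smul (rP_sa N)).add ((IsSelfAdjoint.all q).smul (iP_sa N))
  have hsv : IsSelfAdjoint v := by
    exact (IsSelfAdjoint.all ε).smul
      (((IsSelfAdjoint.all q).smul (rP_sa N)).sub ((IsSelfAdjoint.all p).smul (iP_sa N)))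
  have uN := comm_u N (Commute.refl N) hN
  have uN' := comm_u (star N) hN.symm (Commute.refl _)
  have vN := comm_v N (Commute.refl N) hN
  have vN' := comm_v (star N) hN.symm (Commute.refl _)
  have huv : Commute u v := (comm_v u uN.symm uN'.symm).symm
  have ru : ∀ x, (⟪x, u x⟫_ℂ).re = p * (⟪x, N x⟫_ℂ).re + q * (⟪x, N x⟫_ℂ).im := by
    intro x
    rw [← rP_re N x, ← iP_re N x, hu]
    simp [inner_add_right, inner_smul_right]
  have rv : ∀ x, (⟪x, v x⟫_ℂ).re = ε * (q * (⟪x, N x⟫_ℂ).re - p * (⟪x, N x⟫_ℂ).im) := by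
    intro x
    rw [← rP_re N x, ← iP_re N x, hv]
    simp [inner_add_right, inner_smul_right]
  obtain ⟨V, hVc, hVi, hV1, hV2⟩ := lex_split u v hsu hsv huv
  have hV1' : ∀ x ∈ V, x ≠ 0 → SS p q ε (⟪x, N x⟫_ℂ).re (⟪x, N x⟫_ℂ).im := by
    intro x hx h0
    have := hV1 x hx h0
    rwa [ru, rv] at this
  refine ⟨p, q, ε, hpq, hε, V, hVc, ?_, ?_, hV1', ?_⟩
  · intro x hx
    exact ⟨hVi N uN vN uN' x hx, hVi _ uN' vN' (by rwa [star_star]) x hx⟩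
  · by_contra hcon
    have h1 : (k : Cardinal) ≤ Module.rank ℂ V := by
      rw [not_le] at hcon
      have := Order.succ_le_of_lt hcon
      have e : k = (k - 1) + 1 := by omega
      rw [e, Cardinal.nat_succ]
      exact this
    obtain ⟨Z, hZV, hZf, hZk⟩ := exists_sub_of_rank V k h1
    have key : ∀ (P : H →L[ℂ] H) (M : Submodule ℂ H) (n : ℕ), (∀ x, P x ∈ M) → Commute P N →
        Commute P (star N) → (∀ X ≤ M, FiniteDimensional ℂ X →
        (∀ x ∈ X, x ≠ 0 → SS p q ε (⟪x, N x⟫_ℂ).re (⟪x, N x⟫_ℂ).im) → Module.finrank ℂ X ≤ n) →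
        Module.finrank ℂ (Z.map P.toLinearMap) ≤ n := by
      intro P M n hPM h1 h2 h
      have h3 : Commute N (star P) := by simpa using h2.star_star.symm
      have h4 : Commute (star N) (star P) := h1.star_star.symm
      apply h
      · rintro _ ⟨z, -, rfl⟩; exact hPM z
      · infer_instance
      · rintro _ ⟨z, hz, rfl⟩ h0
        exact hV1' _ (hVi P (comm_u _ h1.symm h2.symm) (comm_v _ h1.symm h2.symm)
          (comm_u _ h3 h4) z (hZV hz)) h0
    have a := key S.PL S.L nL S.memL S.cL.1 S.cL.2 hL
    have b := key S.PR S.R nR S.memR S.cR.1 S.cR.2 hR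
    have c := key S.PK S.K nK S.memK S.cK.1 S.cK.2 hK
    have hle : Z ≤ (Z.map S.PL.toLinearMap ⊔ Z.map S.PR.toLinearMap) ⊔ Z.map S.PK.toLinearMap := by
      intro z hz
      rw [S.sum z]
      exact Submodule.add_mem_sup (Submodule.add_mem_sup ⟨z, hz, rfl⟩ ⟨z, hz, rfl⟩) ⟨z, hz, rfl⟩
    have d := Submodule.finrank_mono hle
    have e := Submodule.finrank_add_le_finrank_add_finrank
      (Z.map S.PL.toLinearMap ⊔ Z.map S.PR.toLinearMap) (Z.map S.PK.toLinearMap)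
    have f := Submodule.finrank_add_le_finrank_add_finrank
      (Z.map S.PL.toLinearMap) (Z.map S.PR.toLinearMap)
    omega
  · intro x hx h0
    have := hV2 x hx h0
    rw [ru, rv] at this
    rintro (h | ⟨h, h'⟩)
    · rcases this with h1 | ⟨h1, h2⟩ <;> linarith
    · rcases this with h1 | ⟨h1, h2⟩ <;> linarith


lemma simul_diag_abs {E : Type*} [AddCommGroup E] [Module ℂ E] [FiniteDimensional ℂ E]
    (b c : E →ₗ⋆[ℂ] E →ₗ[ℂ] ℂ) (hb : ∀ x y, (starRingEnd ℂ) (b x y) = b y x)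
    (hc : ∀ x y, (starRingEnd ℂ) (c x y) = c y x) (hpos : ∀ x, x ≠ 0 → 0 < (b x x).re)
    {n : ℕ} (hn : Module.finrank ℂ E = n) :
    ∃ (e : Module.Basis (Fin n) ℂ E) (a : Fin n → ℝ), Antitone a ∧
      ∀ i j, b (e i) (e j) = (if i = j then 1 else 0) ∧
        c (e i) (e j) = (if i = j then (a i : ℂ) else 0) := by
  let core : InnerProductSpace.Core ℂ E :=
    { inner := fun x y => b x y
      conj_inner_symm := fun x y => hb y x
      re_inner_nonneg := fun x => by
        by_cases h : x = 0
        · simp [h]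
        · exact (hpos x h).le
      add_left := fun x y z => by simp
      smul_left := fun x y r => by simp
      definite := fun x hx => by
        by_contra h
        have h1 := hpos x h
        have h2 : b x x = 0 := hx
        rw [h2] at h1
        simp at h1 }
  let _ : NormedAddCommGroup E := core.toNormedAddCommGroup
  let _ : InnerProductSpace ℂ E := InnerProductSpace.ofCore core.toCore
  have hin : ∀ x y : E, ⟪x, y⟫_ℂ = b x y := fun x y => rfl
  let o := stdOrthonormalBasis ℂ E
  let T : E →ₗ[ℂ] E := ∑ i, (c (o i)).smulRight (o i)
  have hT : ∀ x y, ⟪x, T y⟫_ℂ = c x y := by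
    intro x y
    conv_rhs => rw [← o.sum_repr x]
    simp only [T, LinearMap.sum_apply, LinearMap.smulRight_apply, inner_sum, inner_smul_right,
      map_sum, LinearMap.map_smulₛₗ, LinearMap.smul_apply, smul_eq_mul, o.repr_apply_apply]
    refine Finset.sum_congr rfl fun i _ => ?_
    rw [inner_conj_symm, mul_comm]
  have hS : T.IsSymmetric := by
    intro x y
    rw [← inner_conj_symm, hT, hT, hc]
  refine ⟨(hS.eigenvectorBasis hn).toBasis, hS.eigenvalues hn, hS.eigenvalues_antitone hn, ?_⟩
  intro i j
  have hon := (orthonormal_iff_ite.1 (hS.eigenvectorBasis hn).orthonormal) 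
  constructor
  · rw [← hin]
    simpa using hon i j
  · rw [← hT]
    simp only [OrthonormalBasis.coe_toBasis]
    rw [hS.apply_eigenvectorBasis hn j, inner_smul_right, hon i j]
    by_cases h : i = j
    · simp [h]
    · simp [h]

/-- Courant–Fischer type statement. -/
lemma simul_diag (B C : H →L[ℂ] H) (hB : IsSelfAdjoint B) (hC : IsSelfAdjoint C)
    (X : Submodule ℂ H) [FiniteDimensional ℂ X]
    (hpos : ∀ x ∈ X, x ≠ 0 → 0 < (⟪x, B x⟫_ℂ).re) {n : ℕ} (hn : Module.finrank ℂ X = n) :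
    ∃ (e : Fin n → H) (a : Fin n → ℝ), (∀ i, e i ∈ X) ∧
      (∀ i j, ⟪e i, B (e j)⟫_ℂ = (if i = j then 1 else 0)) ∧
      (∀ i j, ⟪e i, C (e j)⟫_ℂ = (if i = j then (a i : ℂ) else 0)) ∧
      (∀ (i : Fin n) (s : ℝ) (Y : Submodule ℂ H), Y ≤ X → Module.finrank ℂ Y = i + 1 →
        (∀ y ∈ Y, s * (⟪y, B y⟫_ℂ).re ≤ (⟪y, C y⟫_ℂ).re) → s ≤ a i) := by
  let form : (H →L[ℂ] H) → (X →ₗ⋆[ℂ] X →ₗ[ℂ] ℂ) := fun T =>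
    LinearMap.mk₂'ₛₗ (starRingEnd ℂ) (RingHom.id ℂ) (fun x y => ⟪(x : H), T (y : H)⟫_ℂ)
      (fun x y z => by simp [inner_add_left]) (fun r x y => by simp [mul_comm])
      (fun x y z => by simp [inner_add_right]) (fun r x y => by simp [inner_smul_right])
  have hform : ∀ T x y, form T x y = ⟪(x : H), T (y : H)⟫_ℂ := fun T x y => rfl
  obtain ⟨e, a, ha, hbc⟩ := simul_diag_abs (form B) (form C)
    (fun x y => by rw [hform, hform, inner_conj_symm, sa_symm B hB])
    (fun x y => by rw [hform, hform, inner_conj_symm, sa_symm C hC])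
    (fun x hx => hpos x x.2 (by simpa using hx)) hn
  refine ⟨fun i => e i, a, fun i => (e i).2, fun i j => (hbc i j).1, fun i j => (hbc i j).2, ?_⟩
  intro i s Y hYX hY hs
  -- the tail span
  let W : Submodule ℂ X := Submodule.span ℂ (Set.range (fun j : {j : Fin n // i ≤ j} => e j))
  have hW : Module.finrank ℂ W = n - i := by
    have : LinearIndependent ℂ (fun j : {j : Fin n // i ≤ j} => e j) :=
      e.linearIndependent.comp _ Subtype.val_injective
    rw [finrank_span_eq_card this, Fintype.card_subtype]
    have : (Finset.univ.filter (fun j : Fin n => i ≤ j)) = Finset.Ici i := by ext; simp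
    rw [this, Fin.card_Ici]
  let Y' : Submodule ℂ X := Y.comap X.subtype
  have hY' : Module.finrank ℂ Y' = i + 1 := by
    rw [← hY]
    exact (Submodule.comapSubtypeEquivOfLe hYX).finrank_eq
  have hne : W ⊓ Y' ≠ ⊥ := by
    intro h
    have h1 := Submodule.finrank_sup_add_finrank_inf_eq W Y'
    have h2 := Submodule.finrank_le (W ⊔ Y')
    rw [h, finrank_bot, hW, hY'] at h1
    have := i.2
    omega
  obtain ⟨y, hy, hy0⟩ := Submodule.exists_mem_ne_zero_of_ne_bot hne
  have hy1 : ∀ j, j < i → e.repr y j = 0 := by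
    intro j hj
    have : W ≤ LinearMap.ker (e.coord j) := by
      rw [Submodule.span_le]
      rintro _ ⟨l, rfl⟩
      have : (l : Fin n) ≠ j := fun h => by
        have := l.2; rw [h] at this; exact absurd hj (not_lt.2 this)
      simp [LinearMap.mem_ker, Finsupp.single_apply, this]
    exact this hy.1
  have hexp : ∀ (T : H →L[ℂ] H) (d : Fin n → ℝ), 
      (∀ i j, form T (e i) (e j) = if i = j then (d i : ℂ) else 0) → 
      (⟪(y : H), T y⟫_ℂ).re = ∑ j, d j * ‖e.repr y j‖ ^ 2 := by
    intro T d hd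
    rw [← hform]
    conv_lhs => rw [← e.sum_repr y]
    simp only [map_sum, LinearMap.map_smulₛₗ, LinearMap.sum_apply, LinearMap.smul_apply, smul_eq_mul,
      hd, map_smul, RingHom.id_apply]
    rw [Complex.re_sum]
    refine Finset.sum_congr rfl fun j _ => ?_
    rw [Finset.sum_eq_single j]
    · rw [if_pos rfl, mul_left_comm, ← mul_assoc, mul_comm _ (d j : ℂ), Complex.re_ofReal_mul,
        ← Complex.normSq_eq_norm_sq]
      first
      | rw [Complex.mul_conj, Complex.ofReal_re]
      | rw [Complex.conj_mul', Complex.normSq_eq_norm_sq]; norm_cast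
    · intro l _ hl; simp [hl, hl.symm]
    · simp
  have h1 := hexp B (fun _ => 1) (fun i j => by simpa using (hbc i j).1)
  have h2 := hexp C a (fun i j => (hbc i j).2)
  have h3 := hs y hy.2
  have h4 := hpos y y.2 (by simpa using hy0)
  have h5 : (⟪(y : H), C y⟫_ℂ).re ≤ a i * (⟪(y : H), B y⟫_ℂ).re := by
    rw [h1, h2, Finset.mul_sum]
    refine Finset.sum_le_sum fun j _ => ?_
    by_cases hj : j < i
    · simp [hy1 j hj]
    · rw [one_mul]
      exact mul_le_mul_of_nonneg_right (ha (not_lt.1 hj)) (by positivity)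
  exact le_of_mul_le_mul_right (h3.trans h5) h4


lemma inner_dec (N : H →L[ℂ] H) (x y : H) :
    ⟪x, N y⟫_ℂ = ⟪x, rP N y⟫_ℂ + I * ⟪x, iP N y⟫_ℂ := by
  have : N y = rP N y + I • iP N y := by
    simp only [rP, iP, smul_apply, add_apply, sub_apply, smul_smul, smul_add, smul_sub]
    have e : I * -(I / 2) = (2 : ℂ)⁻¹ := by
      have := Complex.I_mul_I
      linear_combination (-1/2 : ℂ) * this
    rw [e]
    have : (2 : ℂ)⁻¹ • N y + (2 : ℂ)⁻¹ • N y = N y := by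
      rw [← add_smul]; norm_num
    nth_rewrite 1 [← this]
    abel
  conv_lhs => rw [this]
  rw [inner_add_right, inner_smul_right]

lemma pairing (N : H →L[ℂ] H) (S : Split N) (m k' : ℕ) (M : Submodule ℂ H) (hMK : M ≤ S.K)
    [FiniteDimensional ℂ M] (hMm : Module.finrank ℂ M = m)
    (hM : ∀ x ∈ M, 0 ≤ (⟪x, N x⟫_ℂ).re)
    (hP : ∀ i : Fin k', ∃ s : ℝ,
      (∃ X ≤ S.L, Module.finrank ℂ X = i + 1 ∧
        ∀ x ∈ X, s * (⟪x, N x⟫_ℂ).im ≤ (⟪x, N x⟫_ℂ).re) ∧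
      (∃ X ≤ S.R, Module.finrank ℂ X = k' - i ∧
        ∀ x ∈ X, s * (⟪x, N x⟫_ℂ).im ≤ (⟪x, N x⟫_ℂ).re)) :
    ∃ V : Submodule ℂ H, FiniteDimensional ℂ V ∧ Module.finrank ℂ V = m + k' ∧
      ∀ x ∈ V, (⟪x, N x⟫_ℂ).im = 0 ∧ 0 ≤ (⟪x, N x⟫_ℂ).re := by
  choose s hs1 hs2 using hP
  choose X hXL hXr hX using hs1
  choose Y hYR hYr hY using hs2
  have hXf : ∀ i, FiniteDimensional ℂ (X i) := fun i =>
    Module.finite_of_finrank_pos (by rw [hXr]; omega)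
  have hYf : ∀ i, FiniteDimensional ℂ (Y i) := fun i =>
    Module.finite_of_finrank_pos (by rw [hYr]; have := i.2; omega)
  have hXX : (⨆ i, X i) ≤ S.L := iSup_le hXL
  have hYY : (⨆ i, Y i) ≤ S.R := iSup_le hYR
  obtain ⟨e, a, heX, heB, heC, hea⟩ := simul_diag (iP N) (rP N) (iP_sa N) (rP_sa N) (⨆ i, X i)
    (fun x hx h0 => by rw [iP_re]; exact S.posL x (hXX hx) h0) rfl
  obtain ⟨f, a', hfY, hfB, hfC, hfa⟩ := simul_diag (-iP N) (rP N) (iP_sa N).neg (rP_sa N)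
    (⨆ i, Y i) (fun x hx h0 => by
      have := S.negR x (hYY hx) h0
      rw [neg_apply, inner_neg_right, Complex.neg_re, iP_re]; linarith) rfl
  have hnX : ∀ i : Fin k', (i : ℕ) < Module.finrank ℂ (⨆ i, X i : Submodule ℂ H) := by
    intro i
    have : Module.finrank ℂ (X i) ≤ Module.finrank ℂ (⨆ i, X i : Submodule ℂ H) :=
      Submodule.finrank_mono (le_iSup X i)
    rw [hXr] at this; omega
  have hnY : ∀ i : Fin k', k' - 1 - (i : ℕ) < Module.finrank ℂ (⨆ i, Y i : Submodule ℂ H) := by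
    intro i
    have : Module.finrank ℂ (Y i) ≤ Module.finrank ℂ (⨆ i, Y i : Submodule ℂ H) :=
      Submodule.finrank_mono (le_iSup Y i)
    rw [hYr] at this; have := i.2; omega
  let e' : Fin k' → H := fun i => e ⟨i, hnX i⟩
  let f' : Fin k' → H := fun i => f ⟨k' - 1 - i, hnY i⟩
  let α : Fin k' → ℝ := fun i => a ⟨i, hnX i⟩
  let β : Fin k' → ℝ := fun i => a' ⟨k' - 1 - i, hnY i⟩
  have hαβ : ∀ i, 0 ≤ α i + β i := by
    intro i
    have h1 : s i ≤ α i := hea ⟨i, hnX i⟩ (s i) (X i) (le_iSup X i) (hXr i)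
      (fun y hy => by rw [iP_re, rP_re]; exact hX i y hy)
    have h2 : - s i ≤ β i := hfa ⟨k' - 1 - i, hnY i⟩ (- s i) (Y i) (le_iSup Y i)
      (by rw [hYr i]; have := i.2; simp only; omega)
      (fun y hy => by
        rw [neg_apply, inner_neg_right, Complex.neg_re, iP_re, rP_re]
        have := hY i y hy; linarith)
    linarith
  have heL : ∀ i, e' i ∈ S.L := fun i => hXX (heX _)
  have hfR : ∀ i, f' i ∈ S.R := fun i => hYY (hfY _)
  have hee : ∀ i j, ⟪e' i, N (e' j)⟫_ℂ = if i = j then (α i : ℂ) + I else 0 := by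
    intro i j
    rw [inner_dec, heB, heC]
    by_cases h : i = j
    · simp [h, α]
    · have : ¬ ((i : ℕ) = j) := fun h' => h (Fin.ext h')
      simp [h, this]
  have hff : ∀ i j, ⟪f' i, N (f' j)⟫_ℂ = if i = j then (β i : ℂ) - I else 0 := by
    intro i j
    have h1 : ⟪f' i, iP N (f' j)⟫_ℂ = - ⟪f' i, (-iP N) (f' j)⟫_ℂ := by
      rw [neg_apply, inner_neg_right, neg_neg]
    rw [inner_dec, h1, hfB, hfC]
    by_cases h : i = j
    · simp [h, β, sub_eq_add_neg]
    · have : ¬ (k' - 1 - (i : ℕ) = k' - 1 - j) := fun h' => h (Fin.ext (by omega))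
      simp [h, this]
  have hef : ∀ i j, ⟪e' i, N (f' j)⟫_ℂ = 0 := fun i j => S.oLR _ (heL i) _ (S.invR _ (hfR j))
  have hfe : ∀ i j, ⟪f' i, N (e' j)⟫_ℂ = 0 := fun i j =>
    inner_eq_zero_symm.1 (S.oLR _ (S.invL _ (heL j)) _ (hfR i))
  let z : Fin k' → H := fun i => e' i + f' i
  have hzz : ∀ i j, ⟪z i, N (z j)⟫_ℂ = if i = j then ((α i + β i : ℝ) : ℂ) else 0 := by
    intro i j
    simp only [z, map_add, inner_add_left, inner_add_right, hee, hff, hef, hfe]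
    by_cases h : i = j
    · simp [h]
    · simp [h]
  have hez : ∀ i j, ⟪e' i, N (z j)⟫_ℂ = if i = j then (α i : ℂ) + I else 0 := by
    intro i j
    simp only [z, map_add, inner_add_right, hee, hef, add_zero]
  have hzK : ∀ i, ∀ x ∈ S.K, ⟪z i, x⟫_ℂ = 0 := by
    intro i x hx
    simp only [z, inner_add_left, S.oLK _ (heL i) x hx, S.oRK _ (hfR i) x hx, add_zero]
  have hNzK : ∀ i, ∀ x ∈ S.K, ⟪x, N (z i)⟫_ℂ = 0 := by
    intro i x hx
    simp only [z, map_add, inner_add_right,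
      inner_eq_zero_symm.1 (S.oLK _ (S.invL _ (heL i)) x hx),
      inner_eq_zero_symm.1 (S.oRK _ (S.invR _ (hfR i)) x hx), add_zero]
  have hli : LinearIndependent ℂ z := by
    rw [Fintype.linearIndependent_iff]
    intro g hg i
    have h1 : ⟪e' i, N (∑ j, g j • z j)⟫_ℂ = g i * ((α i : ℂ) + I) := by
      simp [map_sum, inner_sum, inner_smul_right, hez]
    rw [hg] at h1
    simp only [map_zero, inner_zero_right] at h1
    rcases mul_eq_zero.1 h1.symm with h | h
    · exact h
    · have := congrArg Complex.im h
      simp at this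
  let Z := Submodule.span ℂ (Set.range z)
  have hZf : FiniteDimensional ℂ Z := FiniteDimensional.span_of_finite ℂ (Set.finite_range _)
  have hZ : ∀ x ∈ Z, ∃ g : Fin k' → ℂ, ∑ i, g i • z i = x := fun x hx =>
    (Submodule.mem_span_range_iff_exists_fun ℂ).1 hx
  have hZk : Module.finrank ℂ Z = k' := by rw [finrank_span_eq_card hli]; simp
  refine ⟨M ⊔ Z, inferInstance, ?_, ?_⟩
  · have h := Submodule.finrank_sup_add_finrank_inf_eq M Z
    have h0 : M ⊓ Z = ⊥ := by
      rw [eq_bot_iff]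
      rintro x ⟨hx1, hx2⟩
      obtain ⟨g, hg⟩ := hZ x hx2
      rw [Submodule.mem_bot]
      have : ⟪∑ i, g i • z i, x⟫_ℂ = 0 := by
        rw [sum_inner]
        exact Finset.sum_eq_zero fun i _ => by rw [inner_smul_left, hzK i x (hMK hx1), mul_zero]
      rw [hg] at this
      exact inner_self_eq_zero.1 this
    rw [h0, finrank_bot, hMm, hZk] at h
    simpa using h
  · intro x hx
    obtain ⟨w, hw, y, hy, rfl⟩ := Submodule.mem_sup.1 hx
    obtain ⟨g, rfl⟩ := hZ y hy
    have h1 : ⟪w, N (∑ i, g i • z i)⟫_ℂ = 0 := by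
      rw [map_sum, inner_sum]
      exact Finset.sum_eq_zero fun i _ => by
        rw [map_smul, inner_smul_right, hNzK i w (hMK hw), mul_zero]
    have h2 : ⟪∑ i, g i • z i, N w⟫_ℂ = 0 := by
      rw [sum_inner]
      exact Finset.sum_eq_zero fun i _ => by
        rw [inner_smul_left, hzK i _ (S.invK w (hMK hw)), mul_zero]
    have h3 : ⟪∑ i, g i • z i, N (∑ i, g i • z i)⟫_ℂ =
        ((∑ i, ‖g i‖ ^ 2 * (α i + β i) : ℝ) : ℂ) := by
      simp only [map_sum, map_smul, inner_sum, sum_inner, inner_smul_left, inner_smul_right, hzz]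
      push_cast
      refine Finset.sum_congr rfl fun i _ => ?_
      rw [Finset.sum_eq_single i]
      · rw [if_pos rfl, ← Complex.conj_mul']; push_cast; ring
      · intro l _ hl; simp [hl, hl.symm]
      · simp
    have h4 : ⟪w + ∑ i, g i • z i, N (w + ∑ i, g i • z i)⟫_ℂ = ⟪w, N w⟫_ℂ + 
        ((∑ i, ‖g i‖ ^ 2 * (α i + β i) : ℝ) : ℂ) := by
      rw [map_add, inner_add_left, inner_add_right, inner_add_right, h1, h2, h3]; ring
    rw [h4, Complex.add_im, Complex.add_re, Complex.ofReal_im, Complex.ofReal_re,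
      S.zeroK w (hMK hw)]
    refine ⟨by simp, add_nonneg (hM w hw) (Finset.sum_nonneg fun i _ => ?_)⟩
    exact mul_nonneg (by positivity) (hαβ i)


lemma gap (N : H →L[ℂ] H) (p q : ℝ) (X : Submodule ℂ H) [FiniteDimensional ℂ X]
    (h : ∀ x ∈ X, x ≠ 0 → 0 < p * (⟪x, N x⟫_ℂ).re + q * (⟪x, N x⟫_ℂ).im) :
    ∃ δ > 0, ∀ x ∈ X, δ * |(⟪x, N x⟫_ℂ).re| ≤ p * (⟪x, N x⟫_ℂ).re + q * (⟪x, N x⟫_ℂ).im ∧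
      δ * |(⟪x, N x⟫_ℂ).im| ≤ p * (⟪x, N x⟫_ℂ).re + q * (⟪x, N x⟫_ℂ).im := by
  let f : X → ℝ := fun x => p * (⟪(x : H), N x⟫_ℂ).re + q * (⟪(x : H), N x⟫_ℂ).im
  have hf : Continuous f := by
    have : Continuous fun x : X => ⟪(x : H), N x⟫_ℂ := by fun_prop
    exact (continuous_const.mul (Complex.continuous_re.comp this)).add
      (continuous_const.mul (Complex.continuous_im.comp this))
  haveI : ProperSpace X := FiniteDimensional.proper ℂ X
  have hmain : ∃ δ > 0, ∀ x ∈ X, δ * ‖x‖ ^ 2 ≤ 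
      p * (⟪x, N x⟫_ℂ).re + q * (⟪x, N x⟫_ℂ).im := by
    by_cases hne : (Metric.sphere (0 : X) 1).Nonempty
    · obtain ⟨y, hy, hmin⟩ := (isCompact_sphere (0 : X) 1).exists_isMinOn hne hf.continuousOn
      have hy1 : ‖y‖ = 1 := by simpa using hy
      have hy0 : (y : H) ≠ 0 := by
        intro h0
        have : ‖(y : H)‖ = 1 := hy1
        rw [h0] at this; simp at this
      refine ⟨f y, h y y.2 hy0, fun x hx => ?_⟩
      by_cases hx0 : x = 0
      · simp [hx0]
      have hn : 0 < ‖x‖ := norm_pos_iff.2 hx0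
      let x' : X := ((‖x‖⁻¹ : ℝ) : ℂ) • ⟨x, hx⟩
      have hx' : x' ∈ Metric.sphere (0 : X) 1 := by
        simp only [mem_sphere_iff_norm, sub_zero, x', norm_smul]
        simp [hn.ne']
      have h1 : f y ≤ f x' := hmin hx'
      have h2 : f x' = (‖x‖⁻¹) ^ 2 * (p * (⟪x, N x⟫_ℂ).re + q * (⟪x, N x⟫_ℂ).im) := by
        have : ⟪(x' : H), N x'⟫_ℂ = ((‖x‖⁻¹ ^ 2 : ℝ) : ℂ) * ⟪x, N x⟫_ℂ := by
          simp only [x', Submodule.coe_smul, map_smul, inner_smul_left, inner_smul_right,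
            Complex.conj_ofReal]
          push_cast; ring
        simp only [f, this, Complex.re_ofReal_mul, Complex.im_ofReal_mul]
        ring
      rw [h2] at h1
      have := mul_le_mul_of_nonneg_right h1 (sq_nonneg ‖x‖)
      calc _ ≤ _ := this
        _ = _ := by field_simp
    · refine ⟨1, one_pos, fun x hx => ?_⟩
      by_cases hx0 : x = 0
      · simp [hx0]
      exfalso; apply hne
      have hn : 0 < ‖x‖ := norm_pos_iff.2 hx0
      refine ⟨((‖x‖⁻¹ : ℝ) : ℂ) • ⟨x, hx⟩, ?_⟩
      simp only [mem_sphere_iff_norm, sub_zero, norm_smul]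
      simp [hn.ne']
  obtain ⟨δ, hδ, hh⟩ := hmain
  refine ⟨δ / (‖N‖ + 1), by positivity, fun x hx => ?_⟩
  have hb : ‖⟪x, N x⟫_ℂ‖ ≤ (‖N‖ + 1) * ‖x‖ ^ 2 := by
    calc _ ≤ ‖x‖ * ‖N x‖ := norm_inner_le_norm _ _
      _ ≤ ‖x‖ * (‖N‖ * ‖x‖) := by gcongr; exact N.le_opNorm x
      _ ≤ _ := by nlinarith [sq_nonneg ‖x‖]
  have e : δ / (‖N‖ + 1) * ((‖N‖ + 1) * ‖x‖ ^ 2) = δ * ‖x‖ ^ 2 := by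
    have : (‖N‖ + 1) ≠ 0 := by positivity
    field_simp
  have hp : 0 ≤ δ / (‖N‖ + 1) := by positivity
  constructor
  · calc _ ≤ δ / (‖N‖ + 1) * ((‖N‖ + 1) * ‖x‖ ^ 2) := by
          gcongr; exact (Complex.abs_re_le_norm _).trans hb
      _ = _ := e
      _ ≤ _ := hh x hx
  · calc _ ≤ δ / (‖N‖ + 1) * ((‖N‖ + 1) * ‖x‖ ^ 2) := by
          gcongr; exact (Complex.abs_im_le_norm _).trans hb
      _ = _ := e
      _ ≤ _ := hh x hx

lemma finrank_le_of_not (V : Submodule ℂ H) [FiniteDimensional ℂ V] (n : ℕ)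
    (h : ∀ Z ≤ V, FiniteDimensional ℂ Z → Module.finrank ℂ Z = n + 1 → False) :
    Module.finrank ℂ V ≤ n := by
  by_contra hc
  obtain ⟨Z, h1, h2, h3⟩ := exists_sub_of_finrank V (n + 1) (by omega)
  exact h Z h1 h2 h3

lemma half (N : H →L[ℂ] H) (hN : Commute (star N) N) (k : ℕ) (hk : 1 ≤ k) :
    (∃ V : Submodule ℂ H, FiniteDimensional ℂ V ∧ Module.finrank ℂ V = k ∧
      ∀ x ∈ V, (⟪x, N x⟫_ℂ).im = 0 ∧ 0 ≤ (⟪x, N x⟫_ℂ).re) ∨ Dec N k := by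
  classical
  obtain ⟨S⟩ := exists_split N hN
  let Q : ℕ → Prop := fun m => ∃ M ≤ S.K, FiniteDimensional ℂ M ∧ Module.finrank ℂ M = m ∧
    ∀ x ∈ M, 0 ≤ (⟪x, N x⟫_ℂ).re
  have hQ0 : Q 0 := ⟨⊥, bot_le, inferInstance, by simp, fun x hx => by
    rw [Submodule.mem_bot] at hx; simp [hx]⟩
  obtain ⟨m, hmk, hQm, hmax⟩ : ∃ m ≤ k, Q m ∧ ∀ m', m < m' → m' ≤ k → ¬ Q m' :=
    ⟨Nat.findGreatest Q k, Nat.findGreatest_le k, Nat.findGreatest_spec (Nat.zero_le k) hQ0,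
      fun m' h1 h2 => Nat.findGreatest_is_greatest h1 h2⟩
  obtain ⟨M, hMK, hMf, hMm, hM⟩ := hQm
  by_cases hm : m = k
  · exact Or.inl ⟨M, hMf, hMm.trans hm, fun x hx => ⟨S.zeroK x (hMK hx), hM x hx⟩⟩
  have hKb : ∀ X ≤ S.K, FiniteDimensional ℂ X → (∀ x ∈ X, x ≠ 0 → 0 ≤ (⟪x, N x⟫_ℂ).re) →
      Module.finrank ℂ X ≤ m := by
    intro X hX hXf h
    refine finrank_le_of_not X m fun Z hZ hZf hZm => ?_
    refine hmax (m + 1) (by omega) (by omega) ⟨Z, hZ.trans hX, hZf, hZm, fun x hx => ?_⟩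
    by_cases hx0 : x = 0
    · simp [hx0]
    · exact h x (hZ hx) hx0
  obtain ⟨k', rfl⟩ := Nat.exists_eq_add_of_le hmk
  have hbL : ∀ x ∈ S.L, 0 ≤ (⟪x, N x⟫_ℂ).im := fun x hx => by
    by_cases hx0 : x = 0
    · simp [hx0]
    · exact (S.posL x hx hx0).le
  have hbR : ∀ x ∈ S.R, (⟪x, N x⟫_ℂ).im ≤ 0 := fun x hx => by
    by_cases hx0 : x = 0
    · simp [hx0]
    · exact (S.negR x hx hx0).le
  let D : ℕ → Set ℝ := fun i => {s | ∃ X ≤ S.L, Module.finrank ℂ X = i + 1 ∧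
        ∀ x ∈ X, s * (⟪x, N x⟫_ℂ).im ≤ (⟪x, N x⟫_ℂ).re}
  let U : ℕ → Set ℝ := fun i => {s | ∃ X ≤ S.R, Module.finrank ℂ X = k' - i ∧
        ∀ x ∈ X, s * (⟪x, N x⟫_ℂ).im ≤ (⟪x, N x⟫_ℂ).re}
  by_cases hP : ∀ i : Fin k', ∃ s : ℝ, s ∈ D i ∧ s ∈ U i
  · exact Or.inl (pairing N S m k' M hMK hMm hM hP)
  right
  push Not at hP
  obtain ⟨⟨i, hi⟩, hDU⟩ := hP
  simp only at hDU
  have hDdown : ∀ s ∈ D i, ∀ s' ≤ s, s' ∈ D i := by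
    rintro s ⟨X, hX, hXr, h⟩ s' hs
    exact ⟨X, hX, hXr, fun x hx => le_trans
      (mul_le_mul_of_nonneg_right hs (hbL x (hX hx))) (h x hx)⟩
  have hUup : ∀ s ∈ U i, ∀ s', s ≤ s' → s' ∈ U i := by
    rintro s ⟨X, hX, hXr, h⟩ s' hs
    exact ⟨X, hX, hXr, fun x hx => le_trans
      (mul_le_mul_of_nonpos_right hs (hbR x (hX hx))) (h x hx)⟩
  have zeroimp : ∀ (X : Submodule ℂ H) (f g : H → ℝ), f 0 = 0 → g 0 = 0 →
      (∀ x ∈ X, x ≠ 0 → f x ≤ g x) → ∀ x ∈ X, f x ≤ g x := by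
    intro X f g h1 h2 h x hx
    by_cases hx0 : x = 0
    · rw [hx0, h1, h2]
    · exact h x hx hx0
  by_cases hD : D i = ∅
  · refine dec_of_bounds N hN S (m + k') 0 1 1 (by simp) (by simp) i 0 m (by omega) ?_ ?_ ?_
    · intro X hX hXf _
      refine finrank_le_of_not X i fun Z hZ hZf hZm => ?_
      obtain ⟨δ, hδ, h⟩ := gap N 0 1 Z (fun x hx h0 => by
        have := S.posL x (hX (hZ hx)) h0; linarith)
      have : -δ⁻¹ ∈ D i := by
        refine ⟨Z, hZ.trans hX, hZm, fun x hx => ?_⟩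
        have h1 := (h x hx).1
        have h2 := neg_abs_le (⟪x, N x⟫_ℂ).re
        have h3 : |(⟪x, N x⟫_ℂ).re| ≤ δ⁻¹ * (⟪x, N x⟫_ℂ).im := by
          rw [inv_mul_eq_div, le_div_iff₀ hδ]; linarith
        linarith
      rw [hD] at this; exact this
    · intro X hX hXf h
      refine finrank_le_of_not X 0 fun Z hZ hZf hZm => ?_
      obtain ⟨x, hx⟩ := Module.finrank_pos_iff_exists_ne_zero.1
        (show 0 < Module.finrank ℂ Z by omega)
      have hx' : (x : H) ≠ 0 := by simpa using hx
      have h1 := h x (hZ x.2) hx'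
      have h2 := S.negR x (hX (hZ x.2)) hx'
      unfold SS at h1
      rcases h1 with h1 | h1 <;> linarith [h1]
    · intro X hX hXf h
      refine hKb X hX hXf fun x hx h0 => ?_
      have h1 := h x hx h0
      unfold SS at h1
      rw [S.zeroK x (hX hx)] at h1
      rcases h1 with h1 | h1 <;> linarith [h1]
  by_cases hU : U i = ∅
  · refine dec_of_bounds N hN S (m + k') 0 (-1) (-1) (by simp) (by simp) 0 (k' - i - 1) m
      (by omega) ?_ ?_ ?_
    · intro X hX hXf h
      refine finrank_le_of_not X 0 fun Z hZ hZf hZm => ?_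
      obtain ⟨x, hx⟩ := Module.finrank_pos_iff_exists_ne_zero.1
        (show 0 < Module.finrank ℂ Z by omega)
      have hx' : (x : H) ≠ 0 := by simpa using hx
      have h1 := h x (hZ x.2) hx'
      have h2 := S.posL x (hX (hZ x.2)) hx'
      unfold SS at h1
      rcases h1 with h1 | h1 <;> linarith [h1]
    · intro X hX hXf _
      refine finrank_le_of_not X (k' - i - 1) fun Z hZ hZf hZm => ?_
      obtain ⟨δ, hδ, h⟩ := gap N 0 (-1) Z (fun x hx h0 => by
        have := S.negR x (hX (hZ hx)) h0; linarith)
      have : δ⁻¹ ∈ U i := by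
        refine ⟨Z, hZ.trans hX, by omega, fun x hx => ?_⟩
        have h1 := (h x hx).1
        have h2 := neg_abs_le (⟪x, N x⟫_ℂ).re
        have h3 : |(⟪x, N x⟫_ℂ).re| ≤ δ⁻¹ * (-(⟪x, N x⟫_ℂ).im) := by
          rw [inv_mul_eq_div, le_div_iff₀ hδ]; linarith
        linarith
      rw [hU] at this; exact this
    · intro X hX hXf h
      refine hKb X hX hXf fun x hx h0 => ?_
      have h1 := h x hx h0
      unfold SS at h1
      rw [S.zeroK x (hX hx)] at h1
      rcases h1 with h1 | h1 <;> linarith [h1]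
  obtain ⟨d0, hd0⟩ := Set.nonempty_iff_ne_empty.2 hD
  obtain ⟨u0, hu0⟩ := Set.nonempty_iff_ne_empty.2 hU
  have hbd : BddAbove (D i) := ⟨u0, fun s hs => by
    by_contra hc
    exact hDU s hs (hUup u0 hu0 s (by linarith))⟩
  set s0 := sSup (D i) with hs0
  have hlt : ∀ s < s0, s ∈ D i := by
    intro s hs
    obtain ⟨s', h1, h2⟩ := exists_lt_of_lt_csSup ⟨d0, hd0⟩ hs
    exact hDdown s' h1 s h2.le
  have hgt : ∀ s, s0 < s → s ∉ D i := fun s hs hc => absurd (le_csSup hbd hc) (not_le.2 hs)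
  have hKK : ∀ ε : ℝ, ∀ X ≤ S.K, FiniteDimensional ℂ X →
      (∀ x ∈ X, x ≠ 0 → SS 1 (-s0) ε (⟪x, N x⟫_ℂ).re (⟪x, N x⟫_ℂ).im) →
      Module.finrank ℂ X ≤ m := by
    intro ε X hX hXf h
    refine hKb X hX hXf fun x hx h0 => ?_
    have h1 := h x hx h0
    unfold SS at h1
    rw [S.zeroK x (hX hx)] at h1
    rcases h1 with h1 | h1 <;> linarith [h1]
  have hweak : ∀ ε : ℝ, ∀ X : Submodule ℂ H,
      (∀ x ∈ X, x ≠ 0 → SS 1 (-s0) ε (⟪x, N x⟫_ℂ).re (⟪x, N x⟫_ℂ).im) →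
      ∀ x ∈ X, s0 * (⟪x, N x⟫_ℂ).im ≤ (⟪x, N x⟫_ℂ).re := by
    intro ε X h
    apply zeroimp X (fun x => s0 * (⟪x, N x⟫_ℂ).im) (fun x => (⟪x, N x⟫_ℂ).re) (by simp) (by simp)
    intro x hx h0
    have h1 := h x hx h0
    unfold SS at h1
    rcases h1 with h1 | h1 <;> linarith [h1]
  by_cases hs0D : s0 ∈ D i
  · refine dec_of_bounds N hN S (m + k') 1 (-s0) 1 (by simp) (by simp) i (k' - i - 1) m
      (by omega) ?_ ?_ (hKK 1)
    · intro X hX hXf h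
      refine finrank_le_of_not X i fun Z hZ hZf hZm => ?_
      obtain ⟨δ, hδ, hh⟩ := gap N 1 (-s0) Z (fun x hx h0 => by
        have hb := S.posL x (hX (hZ hx)) h0
        rcases h x (hZ hx) h0 with h1 | ⟨h1, h2⟩
        · exact h1
        · exfalso
          have : (⟪x, N x⟫_ℂ).re = s0 * (⟪x, N x⟫_ℂ).im := by linarith
          rw [this] at h2
          nlinarith [mul_nonneg (sq_nonneg s0) hb.le])
      refine hgt (s0 + δ) (by linarith) ⟨Z, hZ.trans hX, hZm, fun x hx => ?_⟩
      have h1 := (hh x hx).2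
      have h2 := mul_le_mul_of_nonneg_left (le_abs_self (⟪x, N x⟫_ℂ).im) hδ.le
      linarith
    · intro X hX hXf h
      refine finrank_le_of_not X (k' - i - 1) fun Z hZ hZf hZm => ?_
      exact hDU s0 hs0D ⟨Z, hZ.trans hX, by omega, fun x hx => hweak 1 X h x (hZ hx)⟩
  · refine dec_of_bounds N hN S (m + k') 1 (-s0) (-1) (by simp) (by simp) i (k' - i - 1) m
      (by omega) ?_ ?_ (hKK (-1))
    · intro X hX hXf h
      refine finrank_le_of_not X i fun Z hZ hZf hZm => ?_
      exact hs0D ⟨Z, hZ.trans hX, hZm, fun x hx => hweak (-1) X h x (hZ hx)⟩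
    · intro X hX hXf h
      refine finrank_le_of_not X (k' - i - 1) fun Z hZ hZf hZm => ?_
      obtain ⟨δ, hδ, hh⟩ := gap N 1 (-s0) Z (fun x hx h0 => by
        have hb := S.negR x (hX (hZ hx)) h0
        rcases h x (hZ hx) h0 with h1 | ⟨h1, h2⟩
        · exact h1
        · exfalso
          have : (⟪x, N x⟫_ℂ).re = s0 * (⟪x, N x⟫_ℂ).im := by linarith
          rw [this] at h2
          nlinarith [mul_nonneg (sq_nonneg s0) (neg_nonneg.2 hb.le)])
      refine hDU (s0 - δ) (hlt _ (by linarith)) ⟨Z, hZ.trans hX, by omega, fun x hx => ?_⟩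
      have h1 := (hh x hx).2
      have h2 := mul_le_mul_of_nonneg_left (neg_abs_le (⟪x, N x⟫_ℂ).im) hδ.le
      linarith

lemma gen_orth {E : Type*} [NormedAddCommGroup E] [InnerProductSpace ℂ E] (G T : E →ₗ[ℂ] E)
    (hT : ∀ x y, ⟪G (T x), y⟫_ℂ = ⟪G x, T y⟫_ℂ) (l m : ℂ) (hlm : (starRingEnd ℂ) l ≠ m) :
    ∀ n p q : ℕ, p + q = n → ∀ x y : E, ((T - algebraMap ℂ (Module.End ℂ E) l) ^ p) x = 0 →
      ((T - algebraMap ℂ (Module.End ℂ E) m) ^ q) y = 0 → ⟪G x, y⟫_ℂ = 0 := by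
  intro n
  induction n with
  | zero =>
    intro p q h x y hx hy
    obtain ⟨rfl, rfl⟩ : p = 0 ∧ q = 0 := by omega
    simp at hx
    simp [hx]
  | succ n ih =>
    intro p q h x y hx hy
    rcases p with _ | p
    · simp at hx; simp [hx]
    rcases q with _ | q
    · simp at hy; simp [hy]
    have h1 := ih p (q + 1) (by omega) ((T - algebraMap ℂ (Module.End ℂ E) l) x) y
      (by rw [pow_succ] at hx; exact hx) hy
    have h2 := ih (p + 1) q (by omega) x ((T - algebraMap ℂ (Module.End ℂ E) m) y) hx
      (by rw [pow_succ] at hy; exact hy)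
    simp only [LinearMap.sub_apply, Module.algebraMap_end_apply, map_sub, map_smul,
      inner_sub_left, inner_sub_right, inner_smul_left, inner_smul_right, hT] at h1 h2
    have h3 : ((starRingEnd ℂ) l - m) * ⟪G x, y⟫_ℂ = 0 := by linear_combination h2 - h1
    exact (mul_eq_zero.1 h3).resolve_left (sub_ne_zero.2 hlm)

lemma two_a {E : Type*} [NormedAddCommGroup E] [InnerProductSpace ℂ E] [FiniteDimensional ℂ E]
    (n : ℕ) (hn : Module.finrank ℂ E = 2 * n) (F G : E →ₗ[ℂ] E) (hF : F.IsSymmetric)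
    (hG : G.IsSymmetric) (hGi : Function.Injective G)
    (hFG : ∀ s : ℝ, ∀ x, F x = (s : ℂ) • G x → x = 0) :
    ∃ W : Submodule ℂ E, Module.finrank ℂ W = n ∧
      ∀ x ∈ W, ∀ y ∈ W, ⟪x, F y⟫_ℂ = 0 ∧ ⟪x, G y⟫_ℂ = 0 := by
  let Ge := LinearEquiv.ofInjectiveEndo G hGi
  let T : E →ₗ[ℂ] E := Ge.symm.toLinearMap ∘ₗ F
  have hGT : ∀ x, G (T x) = F x := fun x => Ge.apply_symm_apply (F x)
  have hT : ∀ x y, ⟪G (T x), y⟫_ℂ = ⟪G x, T y⟫_ℂ := by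
    intro x y
    rw [hGT, hF x y, ← hGT y, ← hG x (T y)]
  let Es : Set ℂ → Submodule ℂ E := fun A => ⨆ μ : A, Module.End.maxGenEigenspace T μ
  have hiso : ∀ A : Set ℂ, (∀ l ∈ A, ∀ m ∈ A, (starRingEnd ℂ) l ≠ m) → ∀ x ∈ Es A, ∀ y ∈ Es A,
      ⟪G x, y⟫_ℂ = 0 := by
    intro A hA x hx y hy
    refine Submodule.iSup_induction (fun μ : A => Module.End.maxGenEigenspace T (μ : ℂ))
      (motive := fun x => ⟪G x, y⟫_ℂ = 0) hx ?_ (by simp) ?_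
    · intro l x hx
      refine Submodule.iSup_induction (fun μ : A => Module.End.maxGenEigenspace T (μ : ℂ))
        (motive := fun y => ⟪G x, y⟫_ℂ = 0) hy ?_ (by simp) ?_
      · intro m y hy
        obtain ⟨p, hp⟩ := (Module.End.mem_maxGenEigenspace T _ _).1 hx
        obtain ⟨q, hq⟩ := (Module.End.mem_maxGenEigenspace T _ _).1 hy
        exact gen_orth G T hT l m (hA l l.2 m m.2) (p + q) p q rfl x y hp hq
      · intro y z h1 h2; rw [inner_add_right, h1, h2, add_zero]
    · intro x z h1 h2; rw [map_add, inner_add_left, h1, h2, add_zero]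
  have hinv : ∀ A : Set ℂ, ∀ x ∈ Es A, T x ∈ Es A := by
    intro A x hx
    refine Submodule.iSup_induction (fun μ : A => Module.End.maxGenEigenspace T (μ : ℂ))
      (motive := fun x => T x ∈ Es A) hx ?_ (by simp) ?_
    · intro l x hx
      exact (le_iSup (fun μ : A => Module.End.maxGenEigenspace T (μ : ℂ)) l)
        (Module.End.mapsTo_maxGenEigenspace_of_comm (Commute.refl T) _ hx)
    · intro x z h1 h2; rw [map_add]; exact add_mem h1 h2
  have hdim : ∀ A : Set ℂ, (∀ l ∈ A, ∀ m ∈ A, (starRingEnd ℂ) l ≠ m) →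
      Module.finrank ℂ (Es A) ≤ n := by
    intro A hA
    have h1 : (Es A).map G ≤ (Es A)ᗮ := by
      rintro _ ⟨x, hx, rfl⟩
      rw [Submodule.mem_orthogonal']
      intro y hy
      exact hiso A hA x hx y hy
    have h2 := Submodule.finrank_mono h1
    rw [← (Submodule.equivMapOfInjective G hGi (Es A)).finrank_eq] at h2
    have h3 := Submodule.finrank_add_finrank_orthogonal (Es A)
    omega
  let Ap : Set ℂ := {l | 0 < l.im}
  let An : Set ℂ := {l | l.im < 0}
  have hAp : ∀ l ∈ Ap, ∀ m ∈ Ap, (starRingEnd ℂ) l ≠ m := by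
    rintro l hl m hm rfl
    simp only [Ap, Set.mem_ofPred_eq, Complex.conj_im] at hl hm; linarith
  have hAn : ∀ l ∈ An, ∀ m ∈ An, (starRingEnd ℂ) l ≠ m := by
    rintro l hl m hm rfl
    simp only [An, Set.mem_ofPred_eq, Complex.conj_im] at hl hm; linarith
  have htop : Es Ap ⊔ Es An = ⊤ := by
    rw [eq_top_iff, ← Module.End.iSup_maxGenEigenspace_eq_top T]
    refine iSup_le fun μ => ?_
    rcases lt_trichotomy μ.im 0 with h | h | h
    · exact le_trans (le_iSup (fun μ : An => Module.End.maxGenEigenspace T (μ : ℂ)) ⟨μ, h⟩)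
        le_sup_right
    · have key : ∀ p : ℕ, ∀ x, ((T - algebraMap ℂ (Module.End ℂ E) μ) ^ p) x = 0 → x = 0 := by
        intro p
        induction p with
        | zero => intro x hx; simpa using hx
        | succ p ih =>
          intro x hx
          rw [pow_succ] at hx
          have h1 := ih _ hx
          simp only [LinearMap.sub_apply, Module.algebraMap_end_apply, sub_eq_zero] at h1
          have e : ((μ.re : ℝ) : ℂ) = μ := Complex.ext rfl (by simp [h])
          apply hFG μ.re
          rw [← hGT, h1, map_smul, e]
      intro x hx
      obtain ⟨p, hp⟩ := (Module.End.mem_maxGenEigenspace T _ _).1 hx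
      rw [key p x hp]; exact zero_mem _
    · exact le_trans (le_iSup (fun μ : Ap => Module.End.maxGenEigenspace T (μ : ℂ)) ⟨μ, h⟩)
        le_sup_left
  have h1 := hdim Ap hAp
  have h2 := hdim An hAn
  have h3 := Submodule.finrank_add_le_finrank_add_finrank (Es Ap) (Es An)
  rw [htop, finrank_top, hn] at h3
  refine ⟨Es Ap, by omega, fun x hx y hy => ⟨?_, ?_⟩⟩
  · rw [← hF, ← hGT]; exact hiso Ap hAp _ (hinv Ap x hx) y hy
  · rw [← hG]; exact hiso Ap hAp x hx y hy

lemma two_b {E : Type*} [NormedAddCommGroup E] [InnerProductSpace ℂ E] [FiniteDimensional ℂ E]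
    (n : ℕ) (hn : Module.finrank ℂ E = 2 * n) (X Y : Submodule ℂ E) (hXY : X ⊔ Y = ⊤)
    (F G D J : E →ₗ[ℂ] E) (hF : F.IsSymmetric) (hG : G.IsSymmetric) (hD : D.IsSymmetric)
    (hJ : J.IsSymmetric) (hJi : Function.Injective J)
    (hFX : ∀ x ∈ X, 0 ≤ (⟪x, F x⟫_ℂ).re) (hFY : ∀ x ∈ Y, (⟪x, F x⟫_ℂ).re ≤ 0)
    (hGX : ∀ x ∈ X, (⟪x, G x⟫_ℂ).re = 0) (hGY : ∀ x ∈ Y, (⟪x, G x⟫_ℂ).re = 0)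
    (hDX : ∀ x ∈ X, x ≠ 0 → 0 < (⟪x, D x⟫_ℂ).re) (hDY : ∀ x ∈ Y, x ≠ 0 → (⟪x, D x⟫_ℂ).re < 0)
    (hJX : ∀ x ∈ X, (⟪x, J x⟫_ℂ).re = 0) (hJY : ∀ x ∈ Y, (⟪x, J x⟫_ℂ).re = 0) :
    ∃ z : Fin n → E, Orthonormal ℂ z ∧ ∀ i j, ⟪z i, F (z j)⟫_ℂ = 0 ∧ ⟪z i, G (z j)⟫_ℂ = 0 := by
  have step1 : ∀ η : ℝ, 0 < η → ∃ ε : ℝ, 0 < ε ∧ ε < η ∧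
      Function.Injective (G + (ε : ℂ) • J) := by
    intro η hη
    by_contra hc
    push Not at hc
    let Je := LinearEquiv.ofInjectiveEndo J hJi
    let T : Module.End ℂ E := Je.symm.toLinearMap ∘ₗ G
    have hfin := Module.End.finite_hasEigenvalue T
    have hinj : Function.Injective (fun ε : ℝ => -(ε : ℂ)) := by
      intro a b h; simpa using h
    have hfin2 := hfin.preimage (hinj.injOn (s := _))
    refine (Set.Ioo_infinite hη) (hfin2.subset fun ε hε => ?_)
    have h1 := hc ε hε.1 hε.2
    rw [← LinearMap.ker_eq_bot, Submodule.eq_bot_iff] at h1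
    push Not at h1
    obtain ⟨x, hx, hx0⟩ := h1
    rw [LinearMap.mem_ker] at hx
    refine Module.End.hasEigenvalue_of_hasEigenvector (x := x) ⟨?_, hx0⟩
    rw [Module.End.mem_eigenspace_iff]
    simp only [LinearMap.add_apply, LinearMap.smul_apply] at hx
    have h2 : J (-(ε : ℂ) • x) = G x := by
      rw [map_smul, neg_smul]; exact (eq_neg_of_add_eq_zero_left hx).symm
    have h3 : Je.symm (Je (-(ε : ℂ) • x)) = T x := congrArg Je.symm h2
    rw [LinearEquiv.symm_apply_apply] at h3
    exact h3.symm
  have step2 : ∀ ε : ℝ, 0 < ε → Function.Injective (G + (ε : ℂ) • J) →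
      ∃ z : Fin n → E, Orthonormal ℂ z ∧ ∀ i j, ⟪z i, F (z j) + (ε : ℂ) • D (z j)⟫_ℂ = 0 ∧
        ⟪z i, G (z j) + (ε : ℂ) • J (z j)⟫_ℂ = 0 := by
    intro ε hε hinj
    have hc : (starRingEnd ℂ) (ε : ℂ) = ε := Complex.conj_ofReal ε
    have hF' : (F + (ε : ℂ) • D).IsSymmetric := hF.add (hD.smul hc)
    have hG' : (G + (ε : ℂ) • J).IsSymmetric := hG.add (hJ.smul hc)
    obtain ⟨W, hWn, hW⟩ := two_a n hn (F + (ε : ℂ) • D) (G + (ε : ℂ) • J) hF' hG' hinj (by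
      intro s x hx
      obtain ⟨a, ha, b, hb, rfl⟩ := Submodule.mem_sup.1 (hXY ▸ Submodule.mem_top : x ∈ X ⊔ Y)
      set F' := F + (ε : ℂ) • D with hF'd
      set G' := G + (ε : ℂ) • J with hG'd
      have e1 : (⟪a, F' a⟫_ℂ).re = (⟪a, F a⟫_ℂ).re + ε * (⟪a, D a⟫_ℂ).re := by
        simp [hF'd, inner_add_right, inner_smul_right]
      have e2 : (⟪b, F' b⟫_ℂ).re = (⟪b, F b⟫_ℂ).re + ε * (⟪b, D b⟫_ℂ).re := by
        simp [hF'd, inner_add_right, inner_smul_right]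
      have e3 : (⟪a, G' a⟫_ℂ).re = 0 := by
        simp [hG'd, inner_add_right, inner_smul_right, hGX a ha, hJX a ha]
      have e4 : (⟪b, G' b⟫_ℂ).re = 0 := by
        simp [hG'd, inner_add_right, inner_smul_right, hGY b hb, hJY b hb]
      have f1 : (⟪a, F' b⟫_ℂ).re = (⟪b, F' a⟫_ℂ).re := by
        rw [← hF' a b, ← inner_conj_symm, Complex.conj_re]
      have f2 : (⟪a, G' b⟫_ℂ).re = (⟪b, G' a⟫_ℂ).re := by
        rw [← hG' a b, ← inner_conj_symm, Complex.conj_re]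
      have g1 := congrArg (fun y => (⟪a, y⟫_ℂ).re) hx
      have g2 := congrArg (fun y => (⟪b, y⟫_ℂ).re) hx
      simp only [map_add, inner_add_right, inner_smul_right, Complex.add_re,
        Complex.re_ofReal_mul, smul_add] at g1 g2
      have g3 : (⟪a, F' a⟫_ℂ).re = (⟪b, F' b⟫_ℂ).re := by
        rw [e3, f2] at g1
        rw [e4] at g2
        linarith
      rw [e1, e2] at g3
      have p1 := hFX a ha
      have p2 := hFY b hb
      have p3 : 0 ≤ ε * (⟪a, D a⟫_ℂ).re := by
        by_cases h : a = 0
        · simp [h]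
        · exact (mul_pos hε (hDX a ha h)).le
      have p4 : ε * (⟪b, D b⟫_ℂ).re ≤ 0 := by
        by_cases h : b = 0
        · simp [h]
        · exact (mul_neg_of_pos_of_neg hε (hDY b hb h)).le
      have ha0 : a = 0 := by
        by_contra h
        have := mul_pos hε (hDX a ha h); linarith
      have hb0 : b = 0 := by
        by_contra h
        have := mul_neg_of_pos_of_neg hε (hDY b hb h); linarith
      rw [ha0, hb0, add_zero])
    let bs := (stdOrthonormalBasis ℂ W).reindex (finCongr hWn)
    refine ⟨fun i => (bs i : E), bs.orthonormal.comp_linearIsometry W.subtypeₗᵢ, fun i j => ?_⟩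
    exact hW _ (bs i).2 _ (bs j).2
  have step3 : ∀ m : ℕ, ∃ ε : ℝ, ∃ z : Fin n → E, 0 < ε ∧ ε < 1 / ((m : ℝ) + 1) ∧
      Orthonormal ℂ z ∧ ∀ i j, ⟪z i, F (z j) + (ε : ℂ) • D (z j)⟫_ℂ = 0 ∧
        ⟪z i, G (z j) + (ε : ℂ) • J (z j)⟫_ℂ = 0 := by
    intro m
    obtain ⟨ε, h1, h2, h3⟩ := step1 (1 / ((m : ℝ) + 1)) (by positivity)
    obtain ⟨z, hz⟩ := step2 ε h1 h3
    exact ⟨ε, z, h1, h2, hz⟩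
  choose ε z hε0 hε1 hon hz using step3
  have hεlim : Filter.Tendsto ε Filter.atTop (nhds 0) :=
    squeeze_zero (fun m => (hε0 m).le) (fun m => (hε1 m).le) tendsto_one_div_add_atTop_nhds_zero_nat
  have : ProperSpace E := FiniteDimensional.proper ℂ E
  have hcomp : IsCompact (Metric.closedBall (0 : Fin n → E) 1) := isCompact_closedBall _ _
  obtain ⟨w, -, φ, hφ, hlim⟩ := hcomp.tendsto_subseq (x := z) (fun m => by
    rw [mem_closedBall_zero_iff, pi_norm_le_iff_of_nonneg zero_le_one]
    intro i; exact ((hon m).1 i).le)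
  have hl : ∀ i, Filter.Tendsto (fun m => z (φ m) i) Filter.atTop (nhds (w i)) := fun i =>
    (tendsto_pi_nhds.1 hlim) i
  have hεl : Filter.Tendsto (fun m => ((ε (φ m) : ℝ) : ℂ)) Filter.atTop (nhds 0) := by
    have := (Complex.continuous_ofReal.tendsto 0).comp (hεlim.comp hφ.tendsto_atTop)
    simpa [Function.comp_def] using this
  have hcont : ∀ B : E →ₗ[ℂ] E, Continuous B := fun B => B.continuous_of_finiteDimensional
  have hlB : ∀ (B : E →ₗ[ℂ] E) i, Filter.Tendsto (fun m => B (z (φ m) i)) Filter.atTop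
      (nhds (B (w i))) := fun B i => ((hcont B).tendsto _).comp (hl i)
  have hgen : ∀ B C : E →ₗ[ℂ] E, (∀ m i j, ⟪z m i, B (z m j) + (ε m : ℂ) • C (z m j)⟫_ℂ = 0) →
      ∀ i j, ⟪w i, B (w j)⟫_ℂ = 0 := by
    intro B C h i j
    have h1 := (hl i).inner (𝕜 := ℂ) ((hlB B j).add (hεl.smul (hlB C j)))
    simp only [h, zero_smul, add_zero] at h1
    exact tendsto_nhds_unique h1 tendsto_const_nhds
  refine ⟨w, ?_, fun i j => ⟨hgen F D (fun m i j => (hz m i j).1) i j,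
    hgen G J (fun m i j => (hz m i j).2) i j⟩⟩
  rw [orthonormal_iff_ite]
  intro i j
  have h1 := (hl i).inner (𝕜 := ℂ) (hl j)
  simp only [orthonormal_iff_ite.1 (hon _)] at h1
  exact tendsto_nhds_unique h1 tendsto_const_nhds

abbrev EE (n : ℕ) := EuclideanSpace ℂ (Fin n ⊕ Fin n)

def DD (n : ℕ) : EE n →ₗ[ℂ] EE n where
  toFun x := WithLp.toLp 2 (Sum.elim (fun i => x (Sum.inl i)) (fun i => - x (Sum.inr i)))
  map_add' x y := by ext i; rcases i with i | i <;> simp; ring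
  map_smul' c x := by ext i; rcases i with i | i <;> simp

def JJ (n : ℕ) : EE n →ₗ[ℂ] EE n where
  toFun x := WithLp.toLp 2 (fun i => x i.swap)
  map_add' x y := by ext i; simp
  map_smul' c x := by ext i; simp

lemma two_c (N : H →L[ℂ] H) (n : ℕ) (v w : Fin n → H) (hli : LinearIndependent ℂ (Sum.elim v w))
    (hv : ∀ a : Fin n → ℂ, (⟪∑ i, a i • v i, N (∑ i, a i • v i)⟫_ℂ).im = 0 ∧
      0 ≤ (⟪∑ i, a i • v i, N (∑ i, a i • v i)⟫_ℂ).re)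
    (hw : ∀ a : Fin n → ℂ, (⟪∑ i, a i • w i, N (∑ i, a i • w i)⟫_ℂ).im = 0 ∧
      (⟪∑ i, a i • w i, N (∑ i, a i • w i)⟫_ℂ).re ≤ 0) :
    ∃ z : Fin n → H, LinearIndependent ℂ z ∧
      (∀ i, z i ∈ Submodule.span ℂ (Set.range (Sum.elim v w))) ∧ ∀ i j, ⟪z i, N (z j)⟫_ℂ = 0 := by
  let φ0 : EE n →ₗ[ℂ] H := 
    { toFun := fun x => ∑ i, x i • Sum.elim v w i
      map_add' := fun x y => by simp [add_smul, Finset.sum_add_distrib]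
      map_smul' := fun c x => by simp [mul_smul, Finset.smul_sum] }
  have hφ0 : ∀ x, φ0 x = ∑ i, x i • Sum.elim v w i := fun x => rfl
  let φ : EE n →L[ℂ] H := LinearMap.toContinuousLinearMap φ0
  have hφ : ∀ x, φ x = ∑ i, x i • Sum.elim v w i := fun x => rfl
  let pull : (H →L[ℂ] H) → (EE n →ₗ[ℂ] EE n) := fun B =>
    ((ContinuousLinearMap.adjoint φ ∘L B ∘L φ : EE n →L[ℂ] EE n) : EE n →ₗ[ℂ] EE n)
  have hpull : ∀ B x y, ⟪x, pull B y⟫_ℂ = ⟪φ x, B (φ y)⟫_ℂ := fun B x y =>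
    ContinuousLinearMap.adjoint_inner_right φ x (B (φ y))
  have hsym : ∀ B : H →L[ℂ] H, IsSelfAdjoint B → (pull B).IsSymmetric := by
    intro B hB x y
    rw [hpull, ← inner_conj_symm, hpull, inner_conj_symm]
    exact hB.isSymmetric (φ x) (φ y)
  let X : Submodule ℂ (EE n) :=
    { carrier := {x | ∀ i, x (Sum.inr i) = 0}
      add_mem' := fun {a b} ha hb i => by simp [ha i, hb i]
      zero_mem' := fun i => rfl
      smul_mem' := fun c x hx i => by simp [hx i] }
  let Y : Submodule ℂ (EE n) :=
    { carrier := {x | ∀ i, x (Sum.inl i) = 0}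
      add_mem' := fun {a b} ha hb i => by simp [ha i, hb i]
      zero_mem' := fun i => rfl
      smul_mem' := fun c x hx i => by simp [hx i] }
  have hX : ∀ x ∈ X, ∀ i, x (Sum.inr i) = 0 := fun x hx => hx
  have hY : ∀ x ∈ Y, ∀ i, x (Sum.inl i) = 0 := fun x hx => hx
  have hφX : ∀ x ∈ X, φ x = ∑ i, x (Sum.inl i) • v i := by
    intro x hx
    rw [hφ, Fintype.sum_sum_type]; simp [hX x hx]
  have hφY : ∀ x ∈ Y, φ x = ∑ i, x (Sum.inr i) • w i := by
    intro x hx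
    rw [hφ, Fintype.sum_sum_type]; simp [hY x hx]
  have hin : ∀ x y : EE n, ⟪x, y⟫_ℂ = ∑ i, (starRingEnd ℂ) (x i) * y i := by
    intro x y
    rw [PiLp.inner_apply]
    exact Finset.sum_congr rfl fun i _ => by rw [RCLike.inner_apply, mul_comm]
  have hnorm : ∀ x : EE n, 0 ≤ (⟪x, x⟫_ℂ).re ∧ (x ≠ 0 → 0 < (⟪x, x⟫_ℂ).re) := fun x =>
    ⟨inner_self_nonneg (𝕜 := ℂ), fun h => by
      rw [← RCLike.re_eq_complex_re, inner_self_eq_norm_sq]; have := norm_pos_iff.2 h; positivity⟩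
  have hDX : ∀ x ∈ X, DD n x = x := by
    intro x hx; ext i; rcases i with i | i
    · rfl
    · simp [DD, hX x hx]
  have hDY : ∀ x ∈ Y, DD n x = - x := by
    intro x hx; ext i; rcases i with i | i
    · simp [DD, hY x hx]
    · rfl
  obtain ⟨z, hz, hzz⟩ := two_b n (by simp [two_mul]) X Y (by
      rw [eq_top_iff]
      intro x _
      refine Submodule.mem_sup.2 ⟨WithLp.toLp 2 (Sum.elim (fun i => x (Sum.inl i)) (fun i => 0)),
        fun i => rfl, WithLp.toLp 2 (Sum.elim (fun i => 0) (fun i => x (Sum.inr i))),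
        fun i => rfl, ?_⟩
      ext i; rcases i with i | i <;> simp)
    (pull (rP N)) (pull (iP N)) (DD n) (JJ n) (hsym _ (rP_sa N)) (hsym _ (iP_sa N))
    (by
      intro x y
      rw [hin, hin]
      refine Finset.sum_congr rfl fun i _ => ?_
      rcases i with i | i <;> simp [DD])
    (by
      intro x y
      rw [hin, hin, Fintype.sum_sum_type, Fintype.sum_sum_type, add_comm]
      rfl)
    (by
      intro x y h
      ext i
      have := congrArg (fun u : EE n => u i.swap) h
      simpa [JJ] using this)
    (by intro x hx; rw [hpull, rP_re, hφX x hx]; exact (hv _).2)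
    (by intro x hx; rw [hpull, rP_re, hφY x hx]; exact (hw _).2)
    (by intro x hx; rw [hpull, iP_re, hφX x hx]; exact (hv _).1)
    (by intro x hx; rw [hpull, iP_re, hφY x hx]; exact (hw _).1)
    (by intro x hx h0; rw [hDX x hx]; exact (hnorm x).2 h0)
    (by intro x hx h0; rw [hDY x hx, inner_neg_right, Complex.neg_re]
        have := (hnorm x).2 h0; linarith)
    (by intro x hx; rw [hin, Fintype.sum_sum_type]; simp [JJ, hX x hx])
    (by intro x hx; rw [hin, Fintype.sum_sum_type]; simp [JJ, hY x hx])
  have hker : LinearMap.ker φ0 = ⊥ := by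
    rw [LinearMap.ker_eq_bot']
    intro x hx
    ext i
    exact Fintype.linearIndependent_iff.1 hli (fun i => x i) hx i
  refine ⟨fun i => φ (z i), hz.linearIndependent.map' φ0 hker, fun i => ?_, fun i j => ?_⟩
  · simp only [hφ]
    exact sum_mem fun j _ => Submodule.smul_mem _ _ (Submodule.subset_span ⟨j, rfl⟩)
  · rw [inner_dec, ← hpull, ← hpull, (hzz i j).1, (hzz i j).2]; simp

lemma lin_bdd (r C : ℝ) (h : ∀ s : ℝ, 0 ≤ C + s * r) : r = 0 := by
  by_contra hr
  have := h (-(C + 1) / r)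
  rw [div_mul_cancel₀ _ hr] at this
  linarith

lemma iso_orth (N : H →L[ℂ] H) (V : Submodule ℂ H)
    (hV : ∀ x ∈ V, (⟪x, N x⟫_ℂ).im = 0 ∧ 0 ≤ (⟪x, N x⟫_ℂ).re) (a y : H) (ha : a ∈ V) (hy : y ∈ V)
    (h0 : ⟪a, N a⟫_ℂ = 0) : ⟪a, N y⟫_ℂ = 0 ∧ ⟪y, N a⟫_ℂ = 0 := by
  have key : ∀ t : ℂ, (⟪y, N y⟫_ℂ + (t * ⟪y, N a⟫_ℂ + (starRingEnd ℂ) t * ⟪a, N y⟫_ℂ)).im = 0 ∧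
      0 ≤ (⟪y, N y⟫_ℂ + (t * ⟪y, N a⟫_ℂ + (starRingEnd ℂ) t * ⟪a, N y⟫_ℂ)).re := by
    intro t
    have h1 := hV (y + t • a) (add_mem hy (V.smul_mem t ha))
    have h2 : ⟪y + t • a, N (y + t • a)⟫_ℂ =
        ⟪y, N y⟫_ℂ + (t * ⟪y, N a⟫_ℂ + (starRingEnd ℂ) t * ⟪a, N y⟫_ℂ) := by
      simp only [map_add, map_smul, inner_add_left, inner_add_right, inner_smul_left,
        inner_smul_right, h0]
      ring
    rwa [h2] at h1
  have hy0 := (hV y hy).1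
  have e : ∀ t : ℂ, t * ⟪y, N a⟫_ℂ + (starRingEnd ℂ) t * ⟪a, N y⟫_ℂ = 0 := by
    intro t
    apply Complex.ext
    · refine lin_bdd _ (⟪y, N y⟫_ℂ).re fun s => ?_
      have h1 := (key (s * t)).2
      have h2 : (s : ℂ) * t * ⟪y, N a⟫_ℂ + (starRingEnd ℂ) ((s : ℂ) * t) * ⟪a, N y⟫_ℂ =
          (s : ℂ) * (t * ⟪y, N a⟫_ℂ + (starRingEnd ℂ) t * ⟪a, N y⟫_ℂ) := by
        rw [map_mul, Complex.conj_ofReal]; ring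
      rwa [h2, Complex.add_re, Complex.re_ofReal_mul] at h1
    · have h1 := (key t).1
      rw [Complex.add_im, hy0, zero_add] at h1
      exact h1
  have e1 := e 1
  have e2 := e I
  rw [map_one] at e1
  rw [Complex.conj_I] at e2
  have e3 : I * (⟪y, N a⟫_ℂ - ⟪a, N y⟫_ℂ) = 0 := by linear_combination e2
  have e4 := (mul_eq_zero.1 e3).resolve_left Complex.I_ne_zero
  exact ⟨by linear_combination (e1 - e4) / 2, by linear_combination (e1 + e4) / 2⟩

lemma two_main (N : H →L[ℂ] H) (k : ℕ) (V1 V2 : Submodule ℂ H) [FiniteDimensional ℂ V1]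
    [FiniteDimensional ℂ V2] (h1k : Module.finrank ℂ V1 = k) (h2k : Module.finrank ℂ V2 = k)
    (h1 : ∀ x ∈ V1, (⟪x, N x⟫_ℂ).im = 0 ∧ 0 ≤ (⟪x, N x⟫_ℂ).re)
    (h2 : ∀ x ∈ V2, (⟪x, N x⟫_ℂ).im = 0 ∧ (⟪x, N x⟫_ℂ).re ≤ 0) :
    ∃ V : Submodule ℂ H, FiniteDimensional ℂ V ∧ Module.finrank ℂ V = k ∧
      ∀ x ∈ V, ⟪x, N x⟫_ℂ = 0 := by
  obtain ⟨C, hC⟩ := Submodule.exists_isCompl (V1 ⊓ V2)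
  set K0 := V1 ⊓ V2 with hK0
  have hK1 : K0 ≤ V1 := inf_le_left
  have hK2 : K0 ≤ V2 := inf_le_right
  have hdec : ∀ V : Submodule ℂ H, FiniteDimensional ℂ V → K0 ≤ V → Module.finrank ℂ V = k →
      Module.finrank ℂ K0 + Module.finrank ℂ (C ⊓ V : Submodule ℂ H) = k := by
    intro V hVf hV hVk
    have : FiniteDimensional ℂ (C ⊓ V : Submodule ℂ H) :=
      Submodule.finiteDimensional_of_le inf_le_right
    have a1 : K0 ⊔ C ⊓ V = V := by rw [← sup_inf_assoc_of_le C hV, hC.sup_eq_top, top_inf_eq]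
    have a2 : K0 ⊓ (C ⊓ V) = ⊥ := by rw [← inf_assoc, hC.inf_eq_bot, bot_inf_eq]
    have a3 := Submodule.finrank_sup_add_finrank_inf_eq K0 (C ⊓ V)
    rw [a1, a2, finrank_bot, hVk] at a3
    omega
  have d1 := hdec V1 inferInstance hK1 h1k
  have d2 := hdec V2 inferInstance hK2 h2k
  obtain ⟨n, hn⟩ : ∃ n, n = k - Module.finrank ℂ K0 := ⟨_, rfl⟩
  have f1 : FiniteDimensional ℂ (C ⊓ V1 : Submodule ℂ H) :=
    Submodule.finiteDimensional_of_le inf_le_right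
  have f2 : FiniteDimensional ℂ (C ⊓ V2 : Submodule ℂ H) :=
    Submodule.finiteDimensional_of_le inf_le_right
  let b1 := Module.finBasisOfFinrankEq ℂ (C ⊓ V1 : Submodule ℂ H) (n := n) (by omega)
  let b2 := Module.finBasisOfFinrankEq ℂ (C ⊓ V2 : Submodule ℂ H) (n := n) (by omega)
  let v : Fin n → H := fun i => (b1 i : H)
  let w : Fin n → H := fun i => (b2 i : H)
  have hv : ∀ i, v i ∈ C ⊓ V1 := fun i => (b1 i).2
  have hw : ∀ i, w i ∈ C ⊓ V2 := fun i => (b2 i).2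
  have hvl : LinearIndependent ℂ v := b1.linearIndependent.map' (Submodule.subtype _)
    (Submodule.ker_subtype _)
  have hwl : LinearIndependent ℂ w := b2.linearIndependent.map' (Submodule.subtype _)
    (Submodule.ker_subtype _)
  have hvs : Submodule.span ℂ (Set.range v) ≤ C ⊓ V1 := by
    rw [Submodule.span_le]; rintro _ ⟨i, rfl⟩; exact hv i
  have hws : Submodule.span ℂ (Set.range w) ≤ C ⊓ V2 := by
    rw [Submodule.span_le]; rintro _ ⟨i, rfl⟩; exact hw i
  have hdis : Disjoint (Submodule.span ℂ (Set.range v)) (Submodule.span ℂ (Set.range w)) := by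
    rw [Submodule.disjoint_def]
    intro x hx hx'
    have p1 := hvs hx
    have p2 := hws hx'
    exact Submodule.disjoint_def.1 hC.disjoint x ⟨p1.2, p2.2⟩ p1.1
  obtain ⟨z, hzl, hzs, hz⟩ := two_c N n v w (hvl.sum_type hwl hdis)
    (fun a => h1 _ (sum_mem fun i _ => V1.smul_mem _ (hv i).2))
    (fun a => h2 _ (sum_mem fun i _ => V2.smul_mem _ (hw i).2))
  have hK00 : ∀ a ∈ K0, ⟪a, N a⟫_ℂ = 0 := fun a ha =>
    Complex.ext (le_antisymm (h2 a (hK2 ha)).2 (h1 a (hK1 ha)).2) (h1 a (hK1 ha)).1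
  have hc1 : ∀ a ∈ K0, ∀ y ∈ V1, ⟪a, N y⟫_ℂ = 0 ∧ ⟪y, N a⟫_ℂ = 0 := fun a ha y hy =>
    iso_orth N V1 h1 a y (hK1 ha) hy (hK00 a ha)
  have hc2 : ∀ a ∈ K0, ∀ y ∈ V2, ⟪a, N y⟫_ℂ = 0 ∧ ⟪y, N a⟫_ℂ = 0 := fun a ha y hy => by
    have := iso_orth (-N) V2 (fun x hx => by
      have := h2 x hx
      rw [neg_apply, inner_neg_right, Complex.neg_im, Complex.neg_re]
      exact ⟨by rw [this.1, neg_zero], by linarith [this.2]⟩) a y (hK2 ha) hy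
      (by rw [neg_apply, inner_neg_right, hK00 a ha, neg_zero])
    simpa [inner_neg_right] using this
  have hspan : Submodule.span ℂ (Set.range (Sum.elim v w)) ≤ C ⊓ V1 ⊔ C ⊓ V2 := by
    rw [Submodule.span_le]
    rintro _ ⟨i | i, rfl⟩
    · exact Submodule.mem_sup_left (hv i)
    · exact Submodule.mem_sup_right (hw i)
  let W := Submodule.span ℂ (Set.range z)
  have hW : W ≤ C ⊓ V1 ⊔ C ⊓ V2 := by
    rw [Submodule.span_le]; rintro _ ⟨i, rfl⟩; exact hspan (hzs i)
  have hWC : W ≤ C := hW.trans (sup_le inf_le_left inf_le_left)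
  have hWf : FiniteDimensional ℂ W := FiniteDimensional.span_of_finite ℂ (Set.finite_range _)
  have hWn : Module.finrank ℂ W = n := by rw [finrank_span_eq_card hzl]; simp
  refine ⟨K0 ⊔ W, inferInstance, ?_, ?_⟩
  · have a3 := Submodule.finrank_sup_add_finrank_inf_eq K0 W
    have a2 : K0 ⊓ W = ⊥ := (hC.disjoint.mono_right hWC).eq_bot
    rw [a2, finrank_bot, hWn] at a3
    omega
  · intro x hx
    obtain ⟨a, ha, y, hy, rfl⟩ := Submodule.mem_sup.1 hx
    have hyy : ⟪y, N y⟫_ℂ = 0 := by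
      obtain ⟨g, rfl⟩ := (Submodule.mem_span_range_iff_exists_fun ℂ).1 hy
      simp only [map_sum, map_smul, inner_sum, sum_inner, inner_smul_left, inner_smul_right, hz]
      simp
    obtain ⟨y1, hy1, y2, hy2, hyq⟩ := Submodule.mem_sup.1 (hW hy)
    have p1 := hc1 a ha y1 hy1.2
    have p2 := hc2 a ha y2 hy2.2
    have q1 : ⟪a, N y⟫_ℂ = 0 := by rw [← hyq, map_add, inner_add_right, p1.1, p2.1, add_zero]
    have q2 : ⟪y, N a⟫_ℂ = 0 := by rw [← hyq, inner_add_left, p1.2, p2.2, add_zero]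
    rw [map_add, inner_add_left, inner_add_right, inner_add_right, hK00 a ha, hyy, q1, q2]
    simp

lemma mem_of_iso (A : H →L[ℂ] H) (k : ℕ) (lam : ℂ) (V : Submodule ℂ H) [FiniteDimensional ℂ V]
    (hVk : Module.finrank ℂ V = k) (hV : ∀ x ∈ V, ⟪x, (A - lam • 1) x⟫_ℂ = 0) :
    lam ∈ rankKRange k A := by
  let P := V.starProjection
  have hsa : IsSelfAdjoint P := isSelfAdjoint_starProjection V
  have hmem : ∀ x, P x ∈ V := fun x => Submodule.starProjection_apply_mem V x
  have hid : ∀ x ∈ V, P x = x := fun x hx => Submodule.starProjection_eq_self_iff.2 hx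
  refine ⟨P, ⟨hsa, ?_⟩, ?_, ?_⟩
  · ext x; exact hid _ (hmem x)
  · have : LinearMap.range (P : H →ₗ[ℂ] H) = V := by
      apply le_antisymm
      · rintro _ ⟨x, rfl⟩; exact hmem x
      · intro x hx; exact ⟨x, hid x hx⟩
    rw [opRank, this, ← Module.finrank_eq_rank, hVk]
  · have h0 : ((P ∘L (A - lam • 1) ∘L P : H →L[ℂ] H) : H →ₗ[ℂ] H) = 0 := by
      rw [← inner_map_self_eq_zero]
      intro x
      have := hsa.isSymmetric ((A - lam • 1) (P x)) x
      have h2 := hV (P x) (hmem x)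
      change ⟪P ((A - lam • 1) (P x)), x⟫_ℂ = 0
      have h3 : ⟪P ((A - lam • 1) (P x)), x⟫_ℂ = ⟪(A - lam • 1) (P x), P x⟫_ℂ := this
      rw [h3]
      exact inner_eq_zero_symm.1 h2
    ext x
    have h1 := LinearMap.congr_fun h0 x
    change P ((A - lam • 1) (P x)) = 0 at h1
    have h2 : (A - lam • 1) (P x) = A (P x) - lam • P x := by simp
    rw [h2, map_sub, map_smul, hid _ (hmem x), sub_eq_zero] at h1
    exact h1

lemma dec_neg (N : H →L[ℂ] H) (k : ℕ) (h : Dec (-N) k) : Dec N k := by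
  obtain ⟨p, q, ε, hpq, hε, V, hc, hi, hr, h1, h2⟩ := h
  have e : ∀ x, SS p q ε (⟪x, (-N) x⟫_ℂ).re (⟪x, (-N) x⟫_ℂ).im ↔
      SS (-p) (-q) ε (⟪x, N x⟫_ℂ).re (⟪x, N x⟫_ℂ).im := by
    intro x
    unfold SS
    rw [neg_apply, inner_neg_right, Complex.neg_re, Complex.neg_im]
    ring_nf
  refine ⟨-p, -q, ε, by simpa using hpq, hε, V, hc, ?_, hr, ?_, ?_⟩
  · intro x hx
    have := hi x hx
    rw [star_neg, neg_apply, neg_apply] at this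
    exact ⟨neg_mem_iff.1 this.1, neg_mem_iff.1 this.2⟩
  · intro x hx h0; exact (e x).1 (h1 x hx h0)
  · intro x hx h0 hs; exact h2 x hx h0 ((e x).2 hs)

lemma ss_iff (p q ε : ℝ) (hpq : p ≠ 0 ∨ q ≠ 0) (hε : ε = 1 ∨ ε = -1) :
    ∃ (t : ℝ) (L : Set ℝ), (L = Set.Iic 0 ∨ L = Set.Ici 0) ∧ ∀ z : ℂ,
      (SS p q ε z.re z.im ↔ Complex.exp (-(t : ℂ) * Complex.I) * z ∈
        ({w : ℂ | 0 < w.im} ∪ (Complex.ofReal '' L))) := by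
  let ω : ℂ := ⟨q, p⟩
  have hω : ω ≠ 0 := by
    intro h
    have h1 := congrArg Complex.re h
    have h2 := congrArg Complex.im h
    simp [ω] at h1 h2
    tauto
  have hr : 0 < ‖ω‖ := norm_pos_iff.2 hω
  have hexp : ∀ z : ℂ, Complex.exp (-((-ω.arg : ℝ) : ℂ) * Complex.I) * z =
      (((‖ω‖)⁻¹ : ℝ) : ℂ) * (ω * z) := by
    intro z
    have h1 : Complex.exp (-((-ω.arg : ℝ) : ℂ) * Complex.I) = (((‖ω‖)⁻¹ : ℝ) : ℂ) * ω := by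
      conv_rhs => rw [← Complex.norm_mul_exp_arg_mul_I ω]
      push_cast
      rw [neg_neg, norm_mul, Complex.norm_exp_ofReal_mul_I, mul_one]
      have : ((‖ω‖ : ℝ) : ℂ) ≠ 0 := by exact_mod_cast hr.ne'
      simp only [Complex.norm_real, norm_norm]
      field_simp
    rw [h1, mul_assoc]
  have him : ∀ z : ℂ, (Complex.exp (-((-ω.arg : ℝ) : ℂ) * Complex.I) * z).im =
      ‖ω‖⁻¹ * (p * z.re + q * z.im) := by
    intro z
    rw [hexp, Complex.im_ofReal_mul, Complex.mul_im]; simp only [ω]; ring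
  have hre : ∀ z : ℂ, (Complex.exp (-((-ω.arg : ℝ) : ℂ) * Complex.I) * z).re =
      ‖ω‖⁻¹ * (q * z.re - p * z.im) := by
    intro z
    rw [hexp, Complex.re_ofReal_mul, Complex.mul_re]
  have hi : 0 < ‖ω‖⁻¹ := inv_pos.2 hr
  have himg : ∀ (L : Set ℝ) (w : ℂ), w ∈ Complex.ofReal '' L ↔ w.im = 0 ∧ w.re ∈ L := by
    intro L w
    constructor
    · rintro ⟨s, hs, rfl⟩; simpa using hs
    · rintro ⟨h1, h2⟩; exact ⟨w.re, h2, Complex.ext rfl (by simp [h1])⟩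
  rcases hε with rfl | rfl
  · refine ⟨-ω.arg, Set.Ici 0, Or.inr rfl, fun z => ?_⟩
    rw [Set.mem_union, himg, hre, him]
    change _ ↔ 0 < (Complex.exp (-((-ω.arg : ℝ) : ℂ) * Complex.I) * z).im ∨ _
    rw [him, Set.mem_Ici, mul_pos_iff_of_pos_left hi, mul_nonneg_iff_of_pos_left hi,
      mul_eq_zero, or_iff_right hi.ne']
    unfold SS
    rw [one_mul]
  · refine ⟨-ω.arg, Set.Iic 0, Or.inl rfl, fun z => ?_⟩
    rw [Set.mem_union, himg, hre, him]
    change _ ↔ 0 < (Complex.exp (-((-ω.arg : ℝ) : ℂ) * Complex.I) * z).im ∨ _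
    rw [him, Set.mem_Iic, mul_pos_iff_of_pos_left hi, ← neg_nonneg, ← mul_neg,
      mul_nonneg_iff_of_pos_left hi, mul_eq_zero, or_iff_right hi.ne']
    unfold SS
    rw [neg_one_mul]

lemma inv_shift (A : H →L[ℂ] H) (lam : ℂ) (V : Submodule ℂ H)
    (h : ∀ x ∈ V, (A - lam • 1) x ∈ V ∧ star (A - lam • 1) x ∈ V) :
    ∀ x ∈ V, A x ∈ V ∧ ContinuousLinearMap.adjoint A x ∈ V := by
  intro x hx
  have h1 := (h x hx).1
  have h2 := (h x hx).2
  have e1 : A x = (A - lam • 1) x + lam • x := by simp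
  have e2 : ContinuousLinearMap.adjoint A x = star (A - lam • 1) x + (starRingEnd ℂ) lam • x := by
    rw [star_sub, star_smul, star_one, ContinuousLinearMap.star_eq_adjoint]; simp
  exact ⟨e1 ▸ add_mem h1 (V.smul_mem _ hx), e2 ▸ add_mem h2 (V.smul_mem _ hx)⟩

/-- For a normal operator `A` and `k ≤ dim ℋ`, `λ ∉ Λ_k(A)` iff `ℋ` decomposes
orthogonally as `V₁ ⊕ V₂` with both summands invariant under `A` and `A*`,
`dim V₁ ≤ k - 1`, the numerical range of `A` restricted to `V₁` contained in
`λ + S` and that of the restriction to `V₂` contained in `ℂ \ (λ + S)`, where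
`S = e^{it}(𝒫 ∪ L̃)` for some `t ∈ ℝ`, `𝒫` the open upper half-plane and
`L̃ = (-∞,0]` or `[0,∞)`. -/
theorem not_mem_rankKRange_iff_normal
    (A : H →L[ℂ] H)
    (hA : ContinuousLinearMap.adjoint A ∘L A = A ∘L ContinuousLinearMap.adjoint A)
    (k : ℕ) (hk : 1 ≤ k) (hkdim : (k : Cardinal) ≤ Module.rank ℂ H) (lam : ℂ) :
    lam ∉ rankKRange k A ↔
      ∃ (t : ℝ) (L : Set ℝ), (L = Set.Iic 0 ∨ L = Set.Ici 0) ∧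
        ∃ V₁ V₂ : Submodule ℂ H,
          IsClosed (V₁ : Set H) ∧ IsClosed (V₂ : Set H) ∧
          (∀ x ∈ V₁, ∀ y ∈ V₂, ⟪x, y⟫_ℂ = 0) ∧
          V₁ ⊔ V₂ = ⊤ ∧
          (∀ x ∈ V₁, A x ∈ V₁ ∧ ContinuousLinearMap.adjoint A x ∈ V₁) ∧
          (∀ x ∈ V₂, A x ∈ V₂ ∧ ContinuousLinearMap.adjoint A x ∈ V₂) ∧
          Module.rank ℂ V₁ ≤ ((k - 1 : ℕ) : Cardinal) ∧
          (∀ x ∈ V₁, ‖x‖ = 1 →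
            Complex.exp (-(t : ℂ) * Complex.I) * (⟪x, A x⟫_ℂ - lam) ∈
              ({w : ℂ | 0 < w.im} ∪ (Complex.ofReal '' L))) ∧
          (∀ x ∈ V₂, ‖x‖ = 1 →
            Complex.exp (-(t : ℂ) * Complex.I) * (⟪x, A x⟫_ℂ - lam) ∉
              ({w : ℂ | 0 < w.im} ∪ (Complex.ofReal '' L))) := by
  constructor
  · intro hlam
    set N : H →L[ℂ] H := A - lam • 1 with hNdef
    have hAs : Commute (star A) A := hA
    have hN : Commute (star N) N := by
      rw [hNdef, star_sub, star_smul, star_one]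
      exact ((hAs.sub_left ((Commute.one_left A).smul_left _))).sub_right
        ((Commute.one_right _).smul_right _)
    have hdec : Dec N k := by
      rcases half N hN k hk with ⟨V1, hf1, hk1, hV1⟩ | h
      · have hN' : Commute (star (-N)) (-N) := by
          rw [star_neg]; exact (hN.neg_left).neg_right
        rcases half (-N) hN' k hk with ⟨V2, hf2, hk2, hV2⟩ | h
        · exfalso
          obtain ⟨V, hVf, hVk, hV⟩ := two_main N k V1 V2 hk1 hk2 hV1 (fun x hx => by
            have := hV2 x hx
            rw [neg_apply, inner_neg_right, Complex.neg_im, Complex.neg_re] at this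
            exact ⟨by linarith [this.1], by linarith [this.2]⟩)
          exact hlam (mem_of_iso A k lam V hVk hV)
        · exact dec_neg N k h
      · exact h
    obtain ⟨p, q, ε, hpq, hε, V, hc, hi, hr, h1, h2⟩ := hdec
    obtain ⟨t, L, hL, hss⟩ := ss_iff p q ε hpq hε
    have : CompleteSpace V := hc.completeSpace_coe
    have hval : ∀ x : H, ‖x‖ = 1 → ⟪x, A x⟫_ℂ - lam = ⟪x, N x⟫_ℂ := by
      intro x hx
      have : N x = A x - lam • x := by simp [hNdef]
      rw [this, inner_sub_right, inner_smul_right, inner_self_eq_norm_sq_to_K, hx]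
      simp
    have hne : ∀ x : H, ‖x‖ = 1 → x ≠ 0 := by
      rintro x hx rfl; simp at hx
    refine ⟨t, L, hL, V, Vᗮ, hc, Submodule.isClosed_orthogonal V, ?_, ?_, ?_, ?_, hr, ?_, ?_⟩
    · intro x hx y hy; exact Submodule.inner_right_of_mem_orthogonal hx hy
    · exact Submodule.sup_orthogonal_of_hasOrthogonalProjection
    · exact inv_shift A lam V hi
    · apply inv_shift A lam
      intro x hx
      rw [Submodule.mem_orthogonal] at hx
      constructor
      · rw [Submodule.mem_orthogonal]
        intro u hu
        have := hx _ (hi u hu).2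
        rwa [ContinuousLinearMap.star_eq_adjoint, ContinuousLinearMap.adjoint_inner_left] at this
      · rw [Submodule.mem_orthogonal]
        intro u hu
        have := hx _ (hi u hu).1
        rwa [ContinuousLinearMap.star_eq_adjoint, ContinuousLinearMap.adjoint_inner_right]
    · intro x hx hx1
      rw [hval x hx1, ← hss]; exact h1 x hx (hne x hx1)
    · intro x hx hx1
      rw [hval x hx1, ← hss]; exact h2 x hx (hne x hx1)
  · rintro ⟨t, L, hL, V₁, V₂, hc1, hc2, horth, hsup, -, -, hrank, -, h2⟩ ⟨P, ⟨hPs, hPP⟩, hPk, hP⟩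
    have : CompleteSpace V₁ := hc1.completeSpace_coe
    have hex : ∃ x ∈ LinearMap.range (P : H →ₗ[ℂ] H), x ≠ 0 ∧ x ∈ V₁ᗮ := by
      by_contra hcon
      push Not at hcon
      let f : LinearMap.range (P : H →ₗ[ℂ] H) →ₗ[ℂ] V₁ :=
        (V₁.orthogonalProjection : H →ₗ[ℂ] V₁) ∘ₗ (LinearMap.range (P : H →ₗ[ℂ] H)).subtype
      have hf : Function.Injective f := by
        rw [← LinearMap.ker_eq_bot, LinearMap.ker_eq_bot']
        intro x hx
        by_contra h0
        refine hcon x x.2 (by simpa using h0) ?_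
        exact Submodule.orthogonalProjection_eq_zero_iff.1 hx
      have h3 := (LinearMap.rank_le_of_injective f hf).trans hrank
      have h4 : Module.rank ℂ (LinearMap.range (P : H →ₗ[ℂ] H)) = k := hPk
      rw [h4, Nat.cast_le] at h3
      omega
    obtain ⟨x, ⟨y, hy⟩, hx0, hxo⟩ := hex
    have hPx : P x = x := by
      rw [← hy]; exact DFunLike.congr_fun hPP y
    have hxV2 : x ∈ V₂ := by
      obtain ⟨a, ha, b, hb, hab⟩ := Submodule.mem_sup.1 (hsup ▸ Submodule.mem_top : x ∈ V₁ ⊔ V₂)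
      have h3 : ⟪a, x⟫_ℂ = 0 := Submodule.inner_right_of_mem_orthogonal ha hxo
      rw [← hab, inner_add_right, horth a ha b hb, add_zero, inner_self_eq_zero] at h3
      rw [← hab, h3, zero_add]; exact hb
    have hn : ‖x‖ ≠ 0 := norm_ne_zero_iff.2 hx0
    let u : H := ((‖x‖⁻¹ : ℝ) : ℂ) • x
    have hu1 : ‖u‖ = 1 := by simp [u, norm_smul, hn]
    have hPu : P u = u := by simp only [u, map_smul, hPx]
    have hval : ⟪u, A u⟫_ℂ = lam := by
      have h3 : P (A (P u)) = lam • P u := DFunLike.congr_fun hP u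
      rw [hPu] at h3
      have h4 : ⟪P u, A u⟫_ℂ = ⟪u, P (A u)⟫_ℂ := hPs.isSymmetric u (A u)
      rw [hPu, h3, inner_smul_right, inner_self_eq_norm_sq_to_K, hu1] at h4
      simpa using h4
    apply h2 u (V₂.smul_mem _ hxV2) hu1
    rw [hval, sub_self, mul_zero]
    right
    refine ⟨0, ?_, by simp⟩
    rcases hL with rfl | rfl <;> simp
end
end

section
/- Let ℋ be an infinite-dimensional complex Hilbert space and A ∈ B(ℋ). Let 𝒮 be any set of finite-rank operators on ℋ containing {2e^{iξ}‖A‖P : ξ ∈ [0,2π), P a finite-rank orthogonal projection on ℋ}. Then Λ_∞(A) = ⋂_{k ≥ 1} Λ_k(A) = ⋂{W(A+F) : F ∈ 𝒮}. -/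
noncomputable section

open scoped InnerProductSpace
open Complex

variable {H : Type*} [NormedAddCommGroup H] [InnerProductSpace ℂ H] [CompleteSpace H]

/-- The rank-`∞` numerical range `Λ_∞(A)`. -/
def rankInfRange (A : H →L[ℂ] H) : Set ℂ :=
  { lam | ∃ P : H →L[ℂ] H, IsOrthProj P ∧ Cardinal.aleph0 ≤ opRank P ∧
      P ∘L A ∘L P = lam • P }


lemma aux_TH (D : H →L[ℂ] H) (M : Submodule ℂ H) :
    Convex ℝ {z : ℂ | ∃ x ∈ M, ‖x‖ = 1 ∧ ⟪x, D x⟫_ℂ = z} := by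
  rw [convex_iff_segment_subset]
  rintro a ⟨x, hxM, hx, hxa⟩ b ⟨y, hyM, hy, hyb⟩ z hz
  rw [segment_eq_image_lineMap] at hz
  obtain ⟨t, ⟨ht0, ht1⟩, rfl⟩ := hz
  by_cases hab : a = b
  · subst hab
    exact ⟨x, hxM, hx, by simpa using hxa⟩
  have hba : b - a ≠ 0 := sub_ne_zero.mpr (Ne.symm hab)
  -- normalised form
  set T : H →L[ℂ] H := (b - a)⁻¹ • (D - a • ContinuousLinearMap.id ℂ H) with hT
  have hTq : ∀ v : H, ⟪v, T v⟫_ℂ = (b - a)⁻¹ * (⟪v, D v⟫_ℂ - a * ((‖v‖ : ℂ)) ^ 2) := by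
    intro v
    simp only [hT, smul_apply, sub_apply,
      ContinuousLinearMap.id_apply, inner_smul_right, inner_sub_right]
    rw [inner_self_eq_norm_sq_to_K]; rfl
  have hTx : ⟪x, T x⟫_ℂ = 0 := by rw [hTq, hx, hxa]; simp
  have hTy : ⟪y, T y⟫_ℂ = 1 := by rw [hTq, hy, hyb]; simp [hba]
  obtain ⟨c, hc, hcim⟩ : ∃ c : ℂ, ‖c‖ = 1 ∧
      (c * (⟪y, T x⟫_ℂ - (starRingEnd ℂ) ⟪x, T y⟫_ℂ)).im = 0 := by
    set w := ⟪y, T x⟫_ℂ - (starRingEnd ℂ) ⟪x, T y⟫_ℂ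
    by_cases hw : w = 0
    · exact ⟨1, by simp, by simp [hw]⟩
    · refine ⟨(starRingEnd ℂ) w / (‖w‖ : ℂ), ?_, ?_⟩
      · simp [hw]
      · have : (starRingEnd ℂ) w / (‖w‖ : ℂ) * w = ((‖w‖ : ℝ) : ℂ) := by
          have h1 : (‖w‖ : ℂ) ≠ 0 := by simpa using hw
          rw [div_mul_eq_mul_div, mul_comm, Complex.mul_conj, Complex.normSq_eq_norm_sq]
          field_simp
          push_cast; ring
        rw [this]; simp
  have hcc : (starRingEnd ℂ) c * c = 1 := by
    rw [mul_comm, Complex.mul_conj, Complex.normSq_eq_norm_sq, hc]; simp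
  let v : ℝ → H := fun s => (s : ℂ) • y + ((1 - s : ℝ) : ℂ) • c • x
  have hvcont : Continuous v := by fun_prop
  have hvM : ∀ s, v s ∈ M := fun s =>
    M.add_mem (M.smul_mem _ hyM) (M.smul_mem _ (M.smul_mem _ hxM))
  have hvim : ∀ s, (⟪v s, T (v s)⟫_ℂ).im = 0 := by
    intro s
    have e : ⟪v s, T (v s)⟫_ℂ = ((s ^ 2 : ℝ) : ℂ) +
        ((s * (1 - s) : ℝ) : ℂ) * (c * ⟪y, T x⟫_ℂ + (starRingEnd ℂ) c * ⟪x, T y⟫_ℂ) := by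
      simp only [v, map_add, map_smul, inner_add_left, inner_add_right, inner_smul_left,
        inner_smul_right, hTx, hTy, Complex.conj_ofReal]
      push_cast; ring
    rw [e, Complex.add_im, Complex.ofReal_im, Complex.im_ofReal_mul]
    have : (c * ⟪y, T x⟫_ℂ + (starRingEnd ℂ) c * ⟪x, T y⟫_ℂ).im = 0 := by
      rw [← hcim]
      simp only [Complex.add_im, Complex.mul_im, Complex.sub_im, Complex.sub_re, Complex.conj_re,
        Complex.conj_im]
      ring
    rw [this]; simp
  let g : ℝ → ℝ := fun s => (⟪v s, T (v s)⟫_ℂ).re - t * ‖v s‖ ^ 2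
  have hgc : Continuous g := by
    have : Continuous fun s => ⟪v s, T (v s)⟫_ℂ := hvcont.inner (T.continuous.comp hvcont)
    exact (Complex.continuous_re.comp this).sub (continuous_const.mul (hvcont.norm.pow 2))
  have hg0 : g 0 = -t := by
    simp [g, v, norm_smul, hc, hx, inner_smul_left, inner_smul_right, hTx]
  have hg1 : g 1 = 1 - t := by
    simp [g, v, hy, hTy]
  obtain ⟨s, -, hs⟩ : (0 : ℝ) ∈ g '' Set.Icc 0 1 := by
    apply intermediate_value_Icc zero_le_one hgc.continuousOn
    rw [hg0, hg1]; constructor <;> linarith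
  have hv0 : v s ≠ 0 := by
    intro h0
    have h1 : (s : ℂ) • y = (-((1 - s : ℝ) : ℂ) * c) • x := by
      have := eq_neg_of_add_eq_zero_left h0
      rw [this, smul_smul, neg_mul, neg_smul]
    have hs0 : s = 0 := by
      have h2 : ⟪(s : ℂ) • y, T ((s : ℂ) • y)⟫_ℂ = 0 := by
        rw [h1, map_smul, inner_smul_left, inner_smul_right, hTx]; simp
      rw [map_smul, inner_smul_left, inner_smul_right, hTy] at h2
      simpa using h2
    subst hs0
    have : ‖v 0‖ = 1 := by simp [v, norm_smul, hc, hx]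
    rw [h0] at this; simp at this
  have hn : (‖v s‖ : ℂ) ≠ 0 := by simpa using hv0
  refine ⟨((‖v s‖ : ℂ)⁻¹) • v s, M.smul_mem _ (hvM s), by simp [norm_smul, hv0], ?_⟩
  have hval : ⟪v s, T (v s)⟫_ℂ = (t : ℂ) * (‖v s‖ : ℂ) ^ 2 := by
    apply Complex.ext
    · have : (⟪v s, T (v s)⟫_ℂ).re = t * ‖v s‖ ^ 2 := by
        have := hs; simp only [g] at this; linarith
      rw [this]; norm_cast
    · rw [hvim]; norm_cast
  rw [hTq] at hval
  have h3 : ⟪v s, D (v s)⟫_ℂ = (a + t * (b - a)) * (‖v s‖ : ℂ) ^ 2 := by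
    field_simp at hval
    linear_combination hval
  rw [map_smul, inner_smul_left, inner_smul_right, h3]
  simp only [map_inv₀, Complex.conj_ofReal, AffineMap.lineMap_apply, vsub_eq_sub, vadd_eq_add,
    Complex.real_smul]
  field_simp
  ring

lemma aux_sep (C : Set ℂ) (hC : Convex ℝ C) (h0 : (0 : ℂ) ∉ C) :
    ∃ u : ℂ, ‖u‖ = 1 ∧ ∀ z ∈ C, 0 ≤ (u * z).re := by
  have key : (Metric.sphere (0 : ℂ) 1 ∩ ⋂ z : C, {u : ℂ | 0 ≤ (u * z).re}).Nonempty := by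
    apply (isCompact_sphere (0 : ℂ) 1).inter_iInter_nonempty
    · intro z
      exact isClosed_le continuous_const
        (Complex.continuous_re.comp (continuous_id.mul continuous_const))
    · intro F
      rcases F.eq_empty_or_nonempty with rfl | ⟨z0, hz0⟩
      · exact ⟨1, by simp⟩
      have hsub : convexHull ℝ ((fun z : C => (z : ℂ)) '' (F : Set C)) ⊆ C := by
        apply convexHull_min _ hC
        rintro _ ⟨z, -, rfl⟩; exact z.2
      have hcl : IsClosed (convexHull ℝ ((fun z : C => (z : ℂ)) '' (F : Set C))) :=
        Set.Finite.isClosed_convexHull ℝ ((F.finite_toSet).image _)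
      obtain ⟨f, c, hf0, hf⟩ := geometric_hahn_banach_point_closed (convex_convexHull ℝ _) hcl
        (fun h => h0 (hsub h))
      rw [map_zero] at hf0
      have hfz : ∀ z ∈ F, 0 < f z := fun z hz =>
        hf0.trans (hf _ (subset_convexHull ℝ _ ⟨z, hz, rfl⟩))
      set w : ℂ := (f 1 : ℂ) - (f Complex.I : ℂ) * Complex.I with hw
      have hfw : ∀ z : ℂ, f z = (w * z).re := by
        intro z
        have : z = z.re • (1 : ℂ) + z.im • Complex.I := by
          simp [Complex.re_add_im]
        conv_lhs => rw [this]
        rw [map_add, map_smul, map_smul]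
        simp [hw]; ring
      have hw0 : w ≠ 0 := by
        intro h
        have := hfz z0 hz0
        rw [hfw, h] at this; simp at this
      refine ⟨((‖w‖⁻¹ : ℝ) : ℂ) * w, ?_, ?_⟩
      · simp [hw0]
      · simp only [Set.mem_iInter, Set.mem_ofPred_eq]
        intro z hz
        rw [mul_assoc, Complex.re_ofReal_mul, ← hfw]
        exact mul_nonneg (by positivity) (hfz z hz).le
  obtain ⟨u, hu, hu'⟩ := key
  refine ⟨u, by simpa using hu, fun z hz => ?_⟩
  have := Set.mem_iInter.mp hu' ⟨z, hz⟩
  exact this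

lemma aux_fd (V N : Submodule ℂ H) [FiniteDimensional ℂ V] (h : ∀ x ∈ N, x ∈ Vᗮ → x = 0) :
    FiniteDimensional ℂ N := by
  let f : N →ₗ[ℂ] V := (V.orthogonalProjectionOnto : H →L[ℂ] V).toLinearMap ∘ₗ N.subtype
  apply FiniteDimensional.of_injective f
  rw [injective_iff_map_eq_zero]
  intro x hx
  have : (x : H) ∈ Vᗮ := by
    rw [← Submodule.starProjection_apply_eq_zero_iff, Submodule.starProjection_apply]
    have : V.orthogonalProjectionOnto (x : H) = 0 := hx
    rw [this]; rfl
  exact Subtype.ext (h x x.2 this)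

lemma aux_pos_zero (T : H →L[ℂ] H) (hT : 0 ≤ T) (x : H) (hx : (⟪x, T x⟫_ℂ).re ≤ 0) :
    T x = 0 := by
  obtain ⟨s, rfl⟩ := CStarAlgebra.nonneg_iff_eq_star_mul_self.mp hT
  have h1 : ⟪x, (star s * s) x⟫_ℂ = ⟪s x, s x⟫_ℂ := by
    rw [ContinuousLinearMap.star_eq_adjoint, mul_apply_eq_comp,
      ContinuousLinearMap.adjoint_inner_right]
  have h2 : s x = 0 := by
    rw [h1] at hx
    have : ‖s x‖ ^ 2 ≤ 0 := by
      rw [inner_self_eq_norm_sq_to_K] at hx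
      norm_cast at hx
    have := norm_nonneg (s x)
    apply norm_eq_zero.mp; nlinarith
  simp [h2]

lemma aux_neg (T : H →L[ℂ] H) (hT : IsSelfAdjoint T) (V : Submodule ℂ H) [FiniteDimensional ℂ V]
    (hV : ∀ x ∈ Vᗮ, 0 ≤ (⟪x, T x⟫_ℂ).re) :
    ∃ N : Submodule ℂ H, FiniteDimensional ℂ N ∧ (∀ x ∈ Nᗮ, T x ∈ Nᗮ) ∧
      (∀ x ∈ Nᗮ, 0 ≤ (⟪x, T x⟫_ℂ).re) ∧ (∀ x ∈ Nᗮ, (⟪x, T x⟫_ℂ).re ≤ 0 → T x = 0) := by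
  have hp : 0 ≤ T⁺ := CFC.posPart_nonneg T
  have hn : 0 ≤ T⁻ := CFC.negPart_nonneg T
  have hd : T⁺ - T⁻ = T := CFC.posPart_sub_negPart T hT
  have hnp : T⁻ * T⁺ = 0 := CFC.negPart_mul_posPart T
  have hpP := (ContinuousLinearMap.nonneg_iff_isPositive _).mp hp
  have hTx : ∀ x, T x = T⁺ x - T⁻ x := fun x => by
    conv_lhs => rw [← hd]
    rfl
  have hnpx : ∀ x, T⁻ (T⁺ x) = 0 := fun x => by
    rw [← mul_apply_eq_comp, hnp]; rfl
  let K : Submodule ℂ H := LinearMap.ker (T⁻ : H →L[ℂ] H).toLinearMap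
  have hKcl : IsClosed (K : Set H) := ContinuousLinearMap.isClosed_ker (T⁻)
  have hKK : Kᗮᗮ = K := by
    have : CompleteSpace K := hKcl.completeSpace_coe
    exact Submodule.orthogonal_orthogonal K
  have hK : ∀ x, x ∈ K ↔ T⁻ x = 0 := fun x => Iff.rfl
  refine ⟨Kᗮ, ?_, ?_, ?_, ?_⟩
  · apply aux_fd V
    intro x hx hxV
    have h1 : T⁺ x = 0 := by
      have : ⟪T⁺ (T⁺ x), x⟫_ℂ = 0 := hx _ ((hK _).mpr (hnpx _))
      rw [hpP.inner_left_eq_inner_right] at this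
      exact inner_self_eq_zero.mp this
    have h2 := hV x hxV
    rw [hTx, h1, zero_sub, inner_neg_right, Complex.neg_re] at h2
    have h3 : T⁻ x = 0 := aux_pos_zero _ hn x (by linarith)
    have : ⟪x, x⟫_ℂ = 0 := hx x ((hK x).mpr h3)
    exact inner_self_eq_zero.mp this
  all_goals
    rw [hKK]
    intro x hx
    rw [hK] at hx
    rw [hTx, hx, sub_zero]
  · exact (hK _).mpr (hnpx x)
  · exact hpP.re_inner_nonneg_right x
  · exact aux_pos_zero _ hp x

lemma aux_re (E : H →L[ℂ] H) : ∃ B : H →L[ℂ] H, IsSelfAdjoint B ∧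
    ∀ x, (⟪x, B x⟫_ℂ).re = (⟪x, E x⟫_ℂ).re := by
  refine ⟨(2 : ℂ)⁻¹ • (E + ContinuousLinearMap.adjoint E), ?_, ?_⟩
  · rw [IsSelfAdjoint, star_smul, star_add, ContinuousLinearMap.star_eq_adjoint,
      ContinuousLinearMap.star_eq_adjoint, ContinuousLinearMap.adjoint_adjoint, add_comm]
    simp
  · intro x
    have : ⟪x, ((2 : ℂ)⁻¹ • (E + ContinuousLinearMap.adjoint E)) x⟫_ℂ =
        (2 : ℂ)⁻¹ * (⟪x, E x⟫_ℂ + (starRingEnd ℂ) ⟪x, E x⟫_ℂ) := by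
      rw [smul_apply, add_apply, inner_smul_right, inner_add_right,
        ContinuousLinearMap.adjoint_inner_right, inner_conj_symm]
    rw [this, Complex.add_conj]
    norm_num
    ring

lemma aux_sa (B : H →L[ℂ] H) (hB : IsSelfAdjoint B) (x y : H) : ⟪x, B y⟫_ℂ = ⟪B x, y⟫_ℂ := by
  conv_lhs => rw [← hB.adjoint_eq]
  rw [ContinuousLinearMap.adjoint_inner_right]

lemma aux_normalize (E : H →L[ℂ] H) (x : H) (hx : x ≠ 0) :
    ‖((‖x‖⁻¹ : ℝ) : ℂ) • x‖ = 1 ∧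
    ⟪((‖x‖⁻¹ : ℝ) : ℂ) • x, E (((‖x‖⁻¹ : ℝ) : ℂ) • x)⟫_ℂ
      = ((‖x‖⁻¹ ^ 2 : ℝ) : ℂ) * ⟪x, E x⟫_ℂ := by
  constructor
  · rw [norm_smul]; simp [hx]
  · rw [map_smul, inner_smul_left, inner_smul_right, Complex.conj_ofReal]
    push_cast; ring

lemma aux_sign (E : H →L[ℂ] H) (M : Submodule ℂ H) (h1 : ∀ x ∈ M, (⟪x, E x⟫_ℂ).re = 0)
    (h2 : ∀ x ∈ M, x ≠ 0 → ⟪x, E x⟫_ℂ ≠ 0) :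
    ∃ e : ℝ, ∀ x ∈ M, x ≠ 0 → 0 < e * (⟪x, E x⟫_ℂ).im := by
  by_cases hall : ∀ x ∈ M, x ≠ 0 → 0 < (⟪x, E x⟫_ℂ).im
  · exact ⟨1, fun x hx h => by simpa using hall x hx h⟩
  push Not at hall
  obtain ⟨x, hx, hx0, hxi⟩ := hall
  refine ⟨-1, fun y hy hy0 => ?_⟩
  by_contra hcon
  have hyi : 0 ≤ (⟪y, E y⟫_ℂ).im := by linarith
  have hconv := (aux_TH E M).is_linear_image (f := Complex.imLm) Complex.imLm.isLinear
  have hmem : ∀ z ∈ M, z ≠ 0 → ‖z‖⁻¹ ^ 2 * (⟪z, E z⟫_ℂ).im ∈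
      Complex.imLm '' {z : ℂ | ∃ x ∈ M, ‖x‖ = 1 ∧ ⟪x, E x⟫_ℂ = z} := by
    intro z hz hz0
    obtain ⟨n1, n2⟩ := aux_normalize E z hz0
    refine ⟨_, ⟨_, M.smul_mem _ hz, n1, n2⟩, ?_⟩
    rw [Complex.imLm_coe, Complex.im_ofReal_mul]
  have h0 := hconv.ordConnected.out (hmem x hx hx0) (hmem y hy hy0)
    (show (0 : ℝ) ∈ Set.Icc _ _ from ⟨mul_nonpos_of_nonneg_of_nonpos (by positivity) hxi,
      mul_nonneg (by positivity) hyi⟩)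
  obtain ⟨_, ⟨w, hw, hw1, rfl⟩, hw2⟩ := h0
  refine h2 w hw ?_ (Complex.ext (h1 w hw) hw2)
  rintro rfl; simp at hw1

lemma aux_core (hH : ¬ FiniteDimensional ℂ H) (A : H →L[ℂ] H) (lam : ℂ)
    (h : ∀ u : ℂ, ‖u‖ = 1 → ∀ (N : Submodule ℂ H) [FiniteDimensional ℂ N],
      ∃ x : H, ‖x‖ = 1 ∧ ⟪x, A x⟫_ℂ + 2 * u * (‖A‖ : ℂ) * (‖N.starProjection x‖ : ℂ) ^ 2 = lam)
    (V : Submodule ℂ H) [FiniteDimensional ℂ V] :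
    ∃ x ∈ Vᗮ, ‖x‖ = 1 ∧ ⟪x, A x⟫_ℂ = lam := by
  by_contra hcon
  push Not at hcon
  set D : H →L[ℂ] H := A - lam • ContinuousLinearMap.id ℂ H with hD
  have hDq : ∀ v : H, ⟪v, D v⟫_ℂ = ⟪v, A v⟫_ℂ - lam * ((‖v‖ ^ 2 : ℝ) : ℂ) := by
    intro v
    simp only [hD, smul_apply, sub_apply,
      ContinuousLinearMap.id_apply, inner_smul_right, inner_sub_right]
    rw [inner_self_eq_norm_sq_to_K]; norm_cast
  obtain ⟨u, hu, husep⟩ := aux_sep _ (aux_TH D Vᗮ) (by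
    rintro ⟨x, hx, hx1, hx0⟩
    apply hcon x hx hx1
    rw [hDq, hx1] at hx0
    simpa [sub_eq_zero] using hx0)
  have huu : u * (starRingEnd ℂ) u = 1 := by
    rw [Complex.mul_conj, Complex.normSq_eq_norm_sq, hu]; simp
  have hu0 : u ≠ 0 := by rintro rfl; simp at hu
  set E : H →L[ℂ] H := u • D with hE
  have hEq0 : ∀ v : H, ⟪v, E v⟫_ℂ = u * ⟪v, D v⟫_ℂ := by
    intro v
    rw [hE, smul_apply, inner_smul_right]
  have hEq : ∀ v : H, ⟪v, E v⟫_ℂ = u * ⟪v, A v⟫_ℂ - u * lam * ((‖v‖ ^ 2 : ℝ) : ℂ) := by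
    intro v
    rw [hEq0, hDq]; ring
  have hEre : ∀ v : H, (⟪v, E v⟫_ℂ).re = (u * ⟪v, A v⟫_ℂ).re - (u * lam).re * ‖v‖ ^ 2 := by
    intro v
    rw [hEq, Complex.sub_re, Complex.re_mul_ofReal]
  have hAb : ∀ v : H, ‖u * ⟪v, A v⟫_ℂ‖ ≤ ‖A‖ * ‖v‖ ^ 2 := by
    intro v
    rw [norm_mul, hu, one_mul]
    calc _ ≤ ‖v‖ * ‖A v‖ := norm_inner_le_norm _ _
      _ ≤ ‖v‖ * (‖A‖ * ‖v‖) := by gcongr; exact A.le_opNorm v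
      _ = _ := by ring
  have hlam : ‖u * lam‖ ≤ ‖A‖ := by
    obtain ⟨x, hx, hxl⟩ := h 1 (by simp) ⊥
    rw [Submodule.starProjection_bot] at hxl
    simp only [zero_apply, norm_zero, Complex.ofReal_zero, ne_eq,
      OfNat.ofNat_ne_zero, not_false_eq_true, zero_pow, mul_zero, add_zero] at hxl
    have := hAb x
    rw [hxl, hx] at this
    simpa using this
  have hM : ∀ x ∈ Vᗮ, x ≠ 0 → ⟪x, E x⟫_ℂ ≠ 0 := by
    intro x hx hx0 h0
    obtain ⟨n1, n2⟩ := aux_normalize D x hx0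
    refine hcon _ (Vᗮ.smul_mem _ hx) n1 ?_
    rw [hEq0] at h0
    have h0' : ⟪x, D x⟫_ℂ = 0 := (mul_eq_zero.mp h0).resolve_left hu0
    rw [h0', mul_zero, hDq, n1] at n2
    simpa [sub_eq_zero] using n2
  have hMre : ∀ x ∈ Vᗮ, 0 ≤ (⟪x, E x⟫_ℂ).re := by
    intro x hx
    by_cases hx0 : x = 0
    · simp [hx0]
    obtain ⟨n1, n2⟩ := aux_normalize D x hx0
    have := husep _ ⟨_, Vᗮ.smul_mem _ hx, n1, n2⟩
    rw [mul_left_comm, ← hEq0, Complex.re_ofReal_mul] at this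
    exact nonneg_of_mul_nonneg_right this (by positivity)
  obtain ⟨x0, hx0V, hx0⟩ : ∃ x ∈ Vᗮ, x ≠ 0 := by
    by_contra hc
    push Not at hc
    have : FiniteDimensional ℂ (⊤ : Submodule ℂ H) := aux_fd V ⊤ (fun x _ hx => hc x hx)
    exact hH (Module.finite_def.mpr (Module.Finite.iff_fg.mp this))
  have claim1 : ∀ n : H, n ≠ 0 → -(2 * ‖A‖ * ‖n‖ ^ 2) < (⟪n, E n⟫_ℂ).re := by
    intro n hn
    by_contra hle
    push Not at hle
    have hnn : 0 < ‖n‖ ^ 2 := by positivity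
    have b1 := (abs_le.mp ((Complex.abs_re_le_norm _).trans (hAb n))).1
    rw [hEre] at hle
    have b2 : ‖A‖ ≤ (u * lam).re := by nlinarith
    have b3 : u * lam = (‖A‖ : ℂ) := by
      have c1 : (u * lam).re = ‖A‖ := le_antisymm ((Complex.re_le_norm _).trans hlam) b2
      have c2 : (u * lam).im = 0 := by
        have := Complex.sq_norm_sub_sq_re (u * lam)
        have h5 : ‖u * lam‖ ^ 2 ≤ ‖A‖ ^ 2 := by gcongr
        rw [c1] at this
        nlinarith
      exact Complex.ext (by simpa using c1) (by simpa using c2)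
    have b4 := hMre x0 hx0V
    rw [hEre, b3, Complex.ofReal_re] at b4
    have b5 : u * ⟪x0, A x0⟫_ℂ = ((‖A‖ * ‖x0‖ ^ 2 : ℝ) : ℂ) := by
      have c1 : (u * ⟪x0, A x0⟫_ℂ).re = ‖A‖ * ‖x0‖ ^ 2 :=
        le_antisymm ((Complex.re_le_norm _).trans (hAb x0)) (by linarith)
      have c2 : (u * ⟪x0, A x0⟫_ℂ).im = 0 := by
        have e1 := Complex.sq_norm_sub_sq_re (u * ⟪x0, A x0⟫_ℂ)
        have e2 : ‖u * ⟪x0, A x0⟫_ℂ‖ ^ 2 ≤ (‖A‖ * ‖x0‖ ^ 2) ^ 2 := by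
          gcongr; exact hAb x0
        rw [c1] at e1
        nlinarith
      exact Complex.ext (by rw [c1, Complex.ofReal_re]) (by rw [c2, Complex.ofReal_im])
    apply hM x0 hx0V hx0
    rw [hEq, b5, b3]; push_cast; ring
  obtain ⟨B, hBsa, hB⟩ := aux_re E
  obtain ⟨N, hNfd, hNinv, hNpos, hNzero⟩ := aux_neg B hBsa V (fun x hx => by
    rw [hB]; exact hMre x hx)
  let K : Submodule ℂ H := Nᗮ ⊓ LinearMap.ker B.toLinearMap
  have hKcl : IsClosed (K : Set H) :=
    (Submodule.isClosed_orthogonal N).inter (ContinuousLinearMap.isClosed_ker B)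
  have hKc : CompleteSpace K := hKcl.completeSpace_coe
  have hKre : ∀ x ∈ K, (⟪x, E x⟫_ℂ).re = 0 := by
    intro x hx
    have hBx : B x = 0 := hx.2
    rw [← hB, hBx]; simp
  obtain ⟨e, he⟩ := aux_sign E (K ⊓ Vᗮ) (fun x hx => hKre x hx.1) (fun x hx => hM x hx.2)
  obtain ⟨C, hCsa, hC0⟩ := aux_re ((-(Complex.I * (e : ℂ))) • E)
  have hC : ∀ x, (⟪x, C x⟫_ℂ).re = e * (⟪x, E x⟫_ℂ).im := by
    intro x
    rw [hC0, smul_apply, inner_smul_right]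
    simp
  let T : H →L[ℂ] H := K.starProjection ∘L C ∘L K.starProjection
  have hTsa : IsSelfAdjoint T := hCsa.conj_starProjection K
  have hTq : ∀ x, ⟪x, T x⟫_ℂ = ⟪K.starProjection x, C (K.starProjection x)⟫_ℂ := by
    intro x
    exact (Submodule.inner_starProjection_left_eq_right K _ _).symm
  let V' : Submodule ℂ H := V.map K.starProjection.toLinearMap
  obtain ⟨N', hN'fd, -, hN'pos, hN'zero⟩ := aux_neg T hTsa V' (fun x hx => by
    rw [hTq, hC]
    have hxK := K.starProjection_apply_mem x
    have hxV : K.starProjection x ∈ Vᗮ := by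
      intro v hv
      rw [← Submodule.inner_starProjection_left_eq_right]
      exact hx _ ⟨v, hv, rfl⟩
    by_cases h0 : K.starProjection x = 0
    · simp [h0]
    · exact (he _ ⟨hxK, hxV⟩ h0).le)
  let Z : Submodule ℂ H := LinearMap.ker T.toLinearMap ⊓ K
  have hTK : ∀ x ∈ K, (⟪x, T x⟫_ℂ).re = e * (⟪x, E x⟫_ℂ).im := by
    intro x hx
    rw [hTq, Submodule.starProjection_eq_self_iff.mpr hx, hC]
  have hZfd : FiniteDimensional ℂ Z := by
    apply aux_fd V
    intro x hx hxV
    by_contra hx0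
    have h1 := he x ⟨hx.2, hxV⟩ hx0
    have h2 : T x = 0 := hx.1
    rw [← hTK x hx.2, h2] at h1
    simp at h1
  let Q : Submodule ℂ H := N ⊔ N' ⊔ Z
  have hQfd : FiniteDimensional ℂ Q := inferInstance
  obtain ⟨x, hx1, hxl⟩ := h ((starRingEnd ℂ) u) (by simpa using hu) Q
  have hxE : ⟪x, E x⟫_ℂ = ((-(2 * ‖A‖ * ‖Q.starProjection x‖ ^ 2) : ℝ) : ℂ) := by
    rw [hEq, hx1, ← hxl]
    push_cast
    linear_combination (-2 * (‖A‖ : ℂ) * (‖Q.starProjection x‖ : ℂ) ^ 2) * huu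
  have hxne : x ≠ 0 := by rintro rfl; simp at hx1
  have hxre : (⟪x, E x⟫_ℂ).re = -(2 * ‖A‖ * ‖Q.starProjection x‖ ^ 2) := by
    rw [hxE, Complex.ofReal_re]
  have hxim : (⟪x, E x⟫_ℂ).im = 0 := by
    rw [hxE, Complex.ofReal_im]
  have hNQ : N ≤ Q := le_sup_left.trans le_sup_left
  have hN'Q : N' ≤ Q := le_sup_right.trans le_sup_left
  have hZQ : Z ≤ Q := le_sup_right
  set n := N.starProjection x with hn
  have hnN : n ∈ N := N.starProjection_apply_mem x
  have hmN : x - n ∈ Nᗮ := N.sub_starProjection_mem_orthogonal x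
  have hnQ : ‖n‖ ≤ ‖Q.starProjection x‖ := by
    have : n = N.starProjection (Q.starProjection x) := by
      rw [hn, ← ContinuousLinearMap.comp_apply,
        Submodule.starProjection_comp_starProjection_of_le hNQ]
    rw [this]
    exact Submodule.norm_starProjection_apply_le _ _
  have hsplit : (⟪x, B x⟫_ℂ).re = (⟪n, B n⟫_ℂ).re + (⟪x - n, B (x - n)⟫_ℂ).re := by
    have c1 : ⟪n, B (x - n)⟫_ℂ = 0 := hNinv _ hmN n hnN
    have c2 : ⟪x - n, B n⟫_ℂ = 0 := by
      rw [aux_sa B hBsa, ← inner_conj_symm, c1, map_zero]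
    have : ⟪x, B x⟫_ℂ = ⟪n + (x - n), B (n + (x - n))⟫_ℂ := by simp
    rw [this, map_add, inner_add_left, inner_add_right, inner_add_right, c1, c2]
    simp only [Complex.add_re, add_zero, zero_add, Complex.zero_re]
  have hm0 := hNpos _ hmN
  have hA0 : 0 ≤ ‖A‖ := norm_nonneg _
  have hnn : n = 0 := by
    by_contra hn0
    have h1 := claim1 n hn0
    have h2 : ‖n‖ ^ 2 ≤ ‖Q.starProjection x‖ ^ 2 := by gcongr
    rw [hB, hxre, hB] at hsplit
    nlinarith
  rw [hnn, sub_zero] at hmN hm0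
  have hBx : B x = 0 := hNzero x hmN (by rw [hB, hxre, neg_nonpos]; positivity)
  have hxK : x ∈ K := ⟨hmN, hBx⟩
  have hre0 := hKre x hxK
  have hApos : 0 < ‖A‖ := by
    have := claim1 x hxne
    rw [hre0, hx1] at this
    linarith
  have hQx : Q.starProjection x = 0 := by
    rw [hre0] at hxre
    have : ‖A‖ * ‖Q.starProjection x‖ ^ 2 = 0 := by linarith
    rcases mul_eq_zero.mp this with h1 | h1
    · exact absurd h1 hApos.ne'
    · simpa using h1
  have hxQ : x ∈ Qᗮ := (Submodule.starProjection_apply_eq_zero_iff Q).mp hQx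
  have hTx : T x = 0 := hN'zero x (Submodule.orthogonal_le hN'Q hxQ) (by
    rw [hTK x hxK, hxim, mul_zero])
  have hxZ : x ∈ Z := ⟨hTx, hxK⟩
  exact hxne (inner_self_eq_zero.mp (hxQ x (hZQ hxZ) : ⟪x, x⟫_ℂ = 0))

lemma aux_proj (U : Submodule ℂ H) [U.HasOrthogonalProjection] : IsOrthProj U.starProjection :=
  ⟨isSelfAdjoint_starProjection U, U.isIdempotentElem_starProjection⟩

lemma aux_rank (U : Submodule ℂ H) [U.HasOrthogonalProjection] :
    opRank U.starProjection = Module.rank ℂ U := by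
  unfold opRank
  rw [Submodule.range_starProjection]

lemma aux_exp (u : ℂ) (hu : ‖u‖ = 1) :
    ∃ ξ ∈ Set.Ico (0 : ℝ) (2 * Real.pi), Complex.exp (ξ * Complex.I) = u := by
  have h1 : Complex.exp (Complex.arg u * Complex.I) = u := by
    have := Complex.norm_mul_exp_arg_mul_I u
    rwa [hu, Complex.ofReal_one, one_mul] at this
  have h2 := Complex.neg_pi_lt_arg u
  have h3 := Complex.arg_le_pi u
  have h4 := Real.pi_pos
  by_cases h : 0 ≤ Complex.arg u
  · exact ⟨Complex.arg u, ⟨h, by linarith⟩, h1⟩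
  · push Not at h
    refine ⟨Complex.arg u + 2 * Real.pi, ⟨by linarith, by linarith⟩, ?_⟩
    push_cast
    rw [add_mul, Complex.exp_add, h1, Complex.exp_two_pi_mul_I, mul_one]

lemma aux_inf_sub (A : H →L[ℂ] H) (k : ℕ) : rankInfRange A ⊆ rankKRange k A := by
  rintro lam ⟨P, ⟨hPsa, hPP⟩, hrank, hP⟩
  have hk : (k : Cardinal) ≤ Module.rank ℂ (LinearMap.range (P : H →ₗ[ℂ] H)) :=
    (Cardinal.natCast_le_aleph0).trans hrank
  obtain ⟨f, hf⟩ := Module.le_rank_iff_exists_linearMap.mp hk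
  let g : (Fin k → ℂ) →ₗ[ℂ] H := (LinearMap.range (P : H →ₗ[ℂ] H)).subtype ∘ₗ f
  have hg : Function.Injective g := (Submodule.injective_subtype _).comp hf
  let W : Submodule ℂ H := LinearMap.range g
  have hfr : Module.finrank ℂ W = k := by
    rw [LinearMap.finrank_range_of_inj hg]; simp
  have hfd : FiniteDimensional ℂ W := inferInstance
  have hPW : ∀ w ∈ W, P w = w := by
    rintro _ ⟨c, rfl⟩
    obtain ⟨y, hy⟩ := (f c).2
    have : g c = P y := hy.symm
    rw [this, ← ContinuousLinearMap.comp_apply, hPP]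
  refine ⟨W.starProjection, aux_proj W, ?_, ?_⟩
  · rw [aux_rank, ← hfr, Module.finrank_eq_rank]
  · ext x
    apply ext_inner_left ℂ
    intro z
    have hx := W.starProjection_apply_mem x
    have hz := W.starProjection_apply_mem z
    have h1 : P (A (W.starProjection x)) = lam • W.starProjection x := by
      have := congrArg (fun T : H →L[ℂ] H => T (W.starProjection x)) hP
      simp only [ContinuousLinearMap.comp_apply, smul_apply, hPW _ hx] at this
      exact this
    simp only [ContinuousLinearMap.comp_apply, smul_apply]
    rw [← Submodule.inner_starProjection_left_eq_right]
    conv_lhs => rw [← hPW _ hz]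
    rw [← aux_sa P hPsa, h1, inner_smul_right, inner_smul_right,
      Submodule.inner_starProjection_left_eq_right,
      Submodule.starProjection_eq_self_iff.mpr hx]

lemma aux_K_sub (A F : H →L[ℂ] H) (hF : opRank F < Cardinal.aleph0) (lam : ℂ)
    (h : ∀ k : ℕ, 1 ≤ k → lam ∈ rankKRange k A) : lam ∈ numRange (A + F) := by
  obtain ⟨r, hr⟩ := Cardinal.lt_aleph0.mp hF
  obtain ⟨P, ⟨hPsa, hPP⟩, hrank, hP⟩ := h (r + 1) (by omega)
  obtain ⟨x, hxP, hx0, hFx⟩ : ∃ x, P x = x ∧ x ≠ 0 ∧ F x = 0 := by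
    by_contra hc
    push Not at hc
    let φ : LinearMap.range (P : H →ₗ[ℂ] H) →ₗ[ℂ] LinearMap.range (F : H →ₗ[ℂ] H) :=
      (F : H →ₗ[ℂ] H).rangeRestrict ∘ₗ (LinearMap.range (P : H →ₗ[ℂ] H)).subtype
    have hφ : Function.Injective φ := by
      rw [injective_iff_map_eq_zero]
      intro x hx
      by_contra hx0
      obtain ⟨y, hy⟩ := x.2
      have h1 : P (x : H) = x := by
        have : (x : H) = P y := hy.symm
        rw [this, ← ContinuousLinearMap.comp_apply, hPP]
      refine hc x h1 (fun h => hx0 (Subtype.ext h)) ?_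
      exact congrArg Subtype.val hx
    have := LinearMap.rank_le_of_injective φ hφ
    change opRank P ≤ opRank F at this
    rw [hr, hrank] at this
    norm_cast at this
    omega
  have hxA : ⟪x, (A + F) x⟫_ℂ = lam * ((‖x‖ ^ 2 : ℝ) : ℂ) := by
    rw [add_apply, hFx, add_zero]
    have h1 : P (A x) = lam • x := by
      have := congrArg (fun T : H →L[ℂ] H => T x) hP
      simpa only [ContinuousLinearMap.comp_apply, smul_apply, hxP] using this
    calc ⟪x, A x⟫_ℂ = ⟪P x, A x⟫_ℂ := by rw [hxP]
      _ = ⟪x, P (A x)⟫_ℂ := (aux_sa P hPsa _ _).symm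
      _ = _ := by
        rw [h1, inner_smul_right, inner_self_eq_norm_sq_to_K]; norm_cast
  obtain ⟨n1, n2⟩ := aux_normalize (A + F) x hx0
  refine ⟨_, n1, ?_⟩
  rw [n2, hxA]
  have : (‖x‖ : ℂ) ≠ 0 := by simpa using hx0
  push_cast
  field_simp

lemma aux_seq (A : H →L[ℂ] H) (lam : ℂ)
    (h : ∀ (V : Submodule ℂ H) [FiniteDimensional ℂ V], ∃ x ∈ Vᗮ, ‖x‖ = 1 ∧ ⟪x, A x⟫_ℂ = lam) :
    lam ∈ rankInfRange A := by
  classical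
  obtain ⟨f, hf1, hf2⟩ := exists_seq_of_forall_finset_exists
    (fun x : H => ‖x‖ = 1 ∧ ⟪x, A x⟫_ℂ = lam)
    (fun x y : H => ⟪x, y⟫_ℂ = 0 ∧ ⟪x, A y⟫_ℂ = 0 ∧ ⟪y, A x⟫_ℂ = 0) (by
      intro s _
      let F : Finset H := s ∪ s.image A ∪ s.image (ContinuousLinearMap.adjoint A)
      obtain ⟨y, hy, hy1, hy2⟩ := h (Submodule.span ℂ (F : Set H))
      refine ⟨y, ⟨hy1, hy2⟩, fun x hx => ?_⟩
      have hmem : ∀ z ∈ F, ⟪z, y⟫_ℂ = 0 := fun z hz => hy z (Submodule.subset_span hz)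
      refine ⟨hmem x ?_, ?_, ?_⟩
      · simp [F, hx]
      · rw [← ContinuousLinearMap.adjoint_inner_left]
        apply hmem
        simp only [F, Finset.mem_union, Finset.mem_image]
        exact Or.inr ⟨x, hx, rfl⟩
      · rw [← inner_conj_symm, hmem (A x), map_zero]
        simp only [F, Finset.mem_union, Finset.mem_image]
        exact Or.inl (Or.inr ⟨x, hx, rfl⟩))
  have horth : Orthonormal ℂ f := by
    refine ⟨fun n => (hf1 n).1, fun m n hmn => ?_⟩
    rcases lt_or_gt_of_ne hmn with hlt | hlt
    · exact (hf2 m n hlt).1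
    · rw [← inner_conj_symm, (hf2 n m hlt).1, map_zero]
  have hA : ∀ m n, ⟪f m, A (f n)⟫_ℂ - lam * ⟪f m, f n⟫_ℂ = 0 := by
    intro m n
    by_cases hmn : m = n
    · subst hmn
      rw [(hf1 m).2, inner_self_eq_norm_sq_to_K, (hf1 m).1]; simp
    · rw [horth.2 hmn]
      rcases lt_or_gt_of_ne hmn with hlt | hlt
      · rw [(hf2 m n hlt).2.1]; simp
      · rw [(hf2 n m hlt).2.2]; simp
  let D : H →L[ℂ] H := A - lam • ContinuousLinearMap.id ℂ H
  have hD : ∀ v w : H, ⟪v, D w⟫_ℂ = ⟪v, A w⟫_ℂ - lam * ⟪v, w⟫_ℂ := by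
    intro v w
    simp only [D, smul_apply, sub_apply, ContinuousLinearMap.id_apply, inner_smul_right,
      inner_sub_right]
  let U : Submodule ℂ H := (Submodule.span ℂ (Set.range f)).topologicalClosure
  have hUc : CompleteSpace U :=
    (Submodule.isClosed_topologicalClosure _).completeSpace_coe
  have hfU : ∀ n, f n ∈ U := fun n =>
    Submodule.le_topologicalClosure _ (Submodule.subset_span ⟨n, rfl⟩)
  have s1 : ∀ m, ∀ u ∈ U, ⟪f m, D u⟫_ℂ = 0 := by
    intro m u hu
    let L : H →L[ℂ] ℂ := (innerSL ℂ (f m)) ∘L D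
    have : U ≤ LinearMap.ker L.toLinearMap := by
      apply Submodule.topologicalClosure_minimal _ _ (ContinuousLinearMap.isClosed_ker L)
      rw [Submodule.span_le]
      rintro _ ⟨n, rfl⟩
      change ⟪f m, D (f n)⟫_ℂ = 0
      rw [hD, hA]
    exact this hu
  have s2 : ∀ u ∈ U, ∀ v ∈ U, ⟪v, D u⟫_ℂ = 0 := by
    intro u hu v hv
    let L : H →L[ℂ] ℂ := innerSL ℂ (D u)
    have : U ≤ LinearMap.ker L.toLinearMap := by
      apply Submodule.topologicalClosure_minimal _ _ (ContinuousLinearMap.isClosed_ker L)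
      rw [Submodule.span_le]
      rintro _ ⟨n, rfl⟩
      change ⟪D u, f n⟫_ℂ = 0
      rw [← inner_conj_symm, s1 n u hu, map_zero]
    have h1 : ⟪D u, v⟫_ℂ = 0 := this hv
    rw [← inner_conj_symm, h1, map_zero]
  refine ⟨U.starProjection, aux_proj U, ?_, ?_⟩
  · rw [aux_rank]
    let g : ℕ → U := fun n => ⟨f n, hfU n⟩
    have hg : LinearIndependent ℂ g :=
      LinearIndependent.of_comp U.subtype horth.linearIndependent
    simpa using hg.cardinal_lift_le_rank
  · ext x
    apply ext_inner_left ℂ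
    intro z
    have hx := U.starProjection_apply_mem x
    have hz := U.starProjection_apply_mem z
    have := s2 _ hx _ hz
    rw [hD, sub_eq_zero] at this
    simp only [ContinuousLinearMap.comp_apply, smul_apply]
    rw [← Submodule.inner_starProjection_left_eq_right, this, inner_smul_right,
      Submodule.inner_starProjection_left_eq_right,
      Submodule.starProjection_eq_self_iff.mpr hx]

/-- For `A` on an infinite-dimensional Hilbert space and any collection `𝒮` of
finite-rank operators containing all operators `2e^{iξ}‖A‖P` with `P` a finite-rank
orthogonal projection and `ξ ∈ [0,2π)`:
`Λ_∞(A) = ⋂_{k ≥ 1} Λ_k(A) = ⋂_{F ∈ 𝒮} W(A+F)`. -/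
theorem rankInfRange_eq_iInter
    (hH : ¬ FiniteDimensional ℂ H) (A : H →L[ℂ] H)
    (S : Set (H →L[ℂ] H))
    (hSrank : ∀ F ∈ S, opRank F < Cardinal.aleph0)
    (hS0 : ∀ ξ ∈ Set.Ico (0 : ℝ) (2 * Real.pi), ∀ P : H →L[ℂ] H,
      IsOrthProj P → opRank P < Cardinal.aleph0 →
      ((2 * Complex.exp (ξ * Complex.I) * (‖A‖ : ℂ)) • P) ∈ S) :
    (rankInfRange A = ⋂ (k : ℕ) (_ : 1 ≤ k), rankKRange k A) ∧
    rankInfRange A = ⋂ F ∈ S, numRange (A + F) := by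
  have hsub3 : ⋂ F ∈ S, numRange (A + F) ⊆ rankInfRange A := by
    intro lam hlam
    apply aux_seq
    intro V _
    apply aux_core hH A lam _ V
    intro u hu N _
    obtain ⟨ξ, hξ, rfl⟩ := aux_exp u hu
    have hmem := hS0 ξ hξ N.starProjection (aux_proj N) (by
      rw [aux_rank]; exact Module.rank_lt_aleph0 ℂ N)
    obtain ⟨x, hx1, hx⟩ := Set.mem_iInter₂.mp hlam _ hmem
    refine ⟨x, hx1, ?_⟩
    rw [← hx, add_apply, smul_apply, inner_add_right, inner_smul_right]
    have h1 : ⟪x, N.starProjection x⟫_ℂ = (‖N.starProjection x‖ : ℂ) ^ 2 := by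
      have h2 : ⟪N.starProjection x, N.starProjection x⟫_ℂ = ⟪x, N.starProjection x⟫_ℂ := by
        rw [Submodule.inner_starProjection_left_eq_right,
          Submodule.starProjection_eq_self_iff.mpr (N.starProjection_apply_mem x)]
      rw [← h2, inner_self_eq_norm_sq_to_K]; rfl
    rw [h1]
  have hsub1 : rankInfRange A ⊆ ⋂ (k : ℕ) (_ : 1 ≤ k), rankKRange k A :=
    Set.subset_iInter₂ fun k _ => aux_inf_sub A k
  have hsub2 : (⋂ (k : ℕ) (_ : 1 ≤ k), rankKRange k A) ⊆ ⋂ F ∈ S, numRange (A + F) := by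
    intro lam hlam
    refine Set.mem_iInter₂.mpr fun F hF => aux_K_sub A F (hSrank F hF) lam ?_
    exact fun k hk => Set.mem_iInter₂.mp hlam k hk
  exact ⟨hsub1.antisymm (hsub2.trans hsub3), (hsub1.trans hsub2).antisymm hsub3⟩
end
end
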